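/- arXiv:1710.00298 — 2 statements merged into one kernel-verified Lean document; each statement's English description precedes it below -/
import Mathlib

section
/- If H is a 3-uniform hypergraph on n vertices with no isolated vertices, then the Staller-start game domination number satisfies γ_g'(H) ≤ (5/9)·n. -/
attribute [local instance 10] Classical.propDecidable

variable {V : Type}

/-- The closed neighborhood of a vertex in a hypergraph given by its edge set. -/
noncomputable def closedNbhd [Fintype V] (H : Finset (Finset V)) (v : V) : Finset V :=
  Finset.univ.filter (fun u => u = v ∨ ∃ e ∈ H, u ∈ e ∧ v ∈ e)

private lemma card_sdiff_union_lt [Fintype V] {S T : Finset V} (h : ¬ T ⊆ S) :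
    (Finset.univ \ (S ∪ T)).card < (Finset.univ \ S).card := by
  classical
  obtain ⟨u, huT, huS⟩ := Finset.not_subset.mp h
  apply Finset.card_lt_card
  rw [Finset.ssubset_def]
  constructor
  · exact Finset.sdiff_subset_sdiff (Finset.Subset.refl _) Finset.subset_union_left
  · intro hc
    have hu : u ∈ Finset.univ \ S := by simp [huS]
    have := hc hu
    simp [huT] at this

/-- Value of the domination game on a hypergraph: `S` is the set of vertices already
dominated, `dom = true` iff Dominator is the next player to move.  A legal move is a vertex
dominating at least one new vertex; Dominator minimizes, Staller maximizes the total
number of moves, and both play optimally. -/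
noncomputable def domGameVal [Fintype V] (H : Finset (Finset V)) (dom : Bool) (S : Finset V) :
    ℕ :=
  if h : (Finset.univ.filter fun v => ¬ closedNbhd H v ⊆ S).Nonempty then
    1 + (if dom then
        (Finset.univ.filter fun v => ¬ closedNbhd H v ⊆ S).attach.inf'
          (Finset.attach_nonempty_iff.mpr h)
          (fun v => domGameVal H false (S ∪ closedNbhd H v.1))
      else
        (Finset.univ.filter fun v => ¬ closedNbhd H v ⊆ S).attach.sup'
          (Finset.attach_nonempty_iff.mpr h)
          (fun v => domGameVal H true (S ∪ closedNbhd H v.1)))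
  else 0
termination_by (Finset.univ \ S).card
decreasing_by
  · exact card_sdiff_union_lt (Finset.mem_filter.mp v.2).2
  · exact card_sdiff_union_lt (Finset.mem_filter.mp v.2).2

/-- The game domination number (Dominator starts). -/
noncomputable def gammaGame [Fintype V] (H : Finset (Finset V)) : ℕ :=
  domGameVal H true ∅

/-- The Staller-start game domination number. -/
noncomputable def gammaGame' [Fintype V] (H : Finset (Finset V)) : ℕ :=
  domGameVal H false ∅

namespace DG
open Finset

noncomputable def wN [Fintype V] (G : SimpleGraph V) (S : Finset V) (v : V) : Finset V :=
  Finset.univ.filter (fun u => u ∉ S ∧ G.Adj v u)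
noncomputable def bN [Fintype V] (G : SimpleGraph V) (S : Finset V) (v : V) : Finset V :=
  Finset.univ.filter (fun u => u ∈ S ∧ G.Adj v u)
noncomputable def cN [Fintype V] (G : SimpleGraph V) (v : V) : Finset V :=
  Finset.univ.filter (fun u => u = v ∨ G.Adj v u)
noncomputable def wn [Fintype V] (G : SimpleGraph V) (S : Finset V) (v : V) : ℕ := (wN G S v).card
noncomputable def bn [Fintype V] (G : SimpleGraph V) (S : Finset V) (v : V) : ℕ := (bN G S v).card
def bw (k : ℕ) : ℤ := if k = 0 then 0 else 5 + k
noncomputable def Phi [Fintype V] (G : SimpleGraph V) (S : Finset V) : ℤ :=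
  ∑ v, if v ∈ S then bw (wn G S v) else 15
noncomputable def Phi0 [Fintype V] (G : SimpleGraph V) (S : Finset V) : ℤ :=
  ∑ v, if v ∈ S then (if wn G S v = 0 then 0 else 9) else 15
noncomputable def gg [Fintype V] (G : SimpleGraph V) (S T : Finset V) (z : V) : ℤ :=
  15 + bn G S z - bw (wn G T z)

variable [Fintype V] {G : SimpleGraph V} {S T : Finset V}

lemma mem_wN {u v : V} : u ∈ wN G S v ↔ u ∉ S ∧ G.Adj v u := by simp [wN]
lemma mem_bN {u v : V} : u ∈ bN G S v ↔ u ∈ S ∧ G.Adj v u := by simp [bN]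
lemma mem_cN {u v : V} : u ∈ cN G v ↔ u = v ∨ G.Adj v u := by simp [cN]

lemma bw_le (k : ℕ) : bw k ≤ 5 + k := by unfold bw; split_ifs <;> omega
lemma bw_zero : bw 0 = 0 := by simp [bw]

lemma wN_anti (h : S ⊆ T) (v : V) : wN G T v ⊆ wN G S v := by
  intro u hu; rw [mem_wN] at *; exact ⟨fun h' => hu.1 (h h'), hu.2⟩
lemma wn_anti (h : S ⊆ T) (v : V) : wn G T v ≤ wn G S v := card_le_card (wN_anti h v)
lemma bn_mono (h : S ⊆ T) (v : V) : bn G S v ≤ bn G T v := by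
  apply card_le_card; intro u hu; rw [mem_bN] at *; exact ⟨h hu.1, hu.2⟩

/-- splitting the white degree -/
lemma wn_add (h : S ⊆ T) (v : V) :
    wn G S v = wn G T v + ((T \ S).filter (fun z => G.Adj v z)).card := by
  unfold wn
  rw [← card_union_of_disjoint]
  · congr 1
    ext u
    simp only [mem_union, mem_wN, mem_filter, mem_sdiff]
    have := @h u
    tauto
  · rw [disjoint_left]; intro u hu hu'
    simp only [mem_wN, mem_filter, mem_sdiff] at *
    tauto

lemma wn_sub (h : S ⊆ T) (v : V) (X : Finset V) (h1 : X ⊆ T \ S) (h2 : ∀ x ∈ X, G.Adj v x) :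
    wn G T v + X.card ≤ wn G S v := by
  rw [wn_add h v]
  gcongr
  intro x hx; rw [mem_filter]; exact ⟨h1 hx, h2 x hx⟩

lemma phi_eq (h : S ⊆ T) : Phi G S = Phi G T + ∑ z ∈ T \ S, gg G S T z +
    5 * ((S.filter (fun y => wn G S y ≠ 0 ∧ wn G T y = 0)).card : ℤ) := by
  have e1 : Phi G S = ∑ v ∈ S, bw (wn G S v) + 15 * (((univ : Finset V) \ S).card : ℤ) := by
    unfold Phi
    rw [← sum_sdiff (subset_univ S), add_comm]
    congr 1
    · apply sum_congr rfl; intro x hx; simp [hx]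
    · rw [sum_congr rfl (g := fun _ => (15:ℤ))]
      · simp [mul_comm]
      · intro x hx; simp at hx; simp [hx]
  have e2 : Phi G T = ∑ v ∈ S, bw (wn G T v) + ∑ v ∈ T \ S, bw (wn G T v)
      + 15 * (((univ : Finset V) \ T).card : ℤ) := by
    unfold Phi
    rw [← sum_sdiff (subset_univ T), add_comm]
    congr 1
    · rw [← sum_sdiff h, add_comm]
      congr 1
      · apply sum_congr rfl; intro x hx; simp [h hx]
      · apply sum_congr rfl; intro x hx; simp at hx; simp [hx]
    · rw [sum_congr rfl (g := fun _ => (15:ℤ))]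
      · simp [mul_comm]
      · intro x hx; simp at hx; simp [hx]
  have e3 : (((univ : Finset V) \ S).card : ℤ) = ((univ : Finset V) \ T).card + (T \ S).card := by
    rw [← Nat.cast_add, ← card_union_of_disjoint]
    · congr 2; ext u; have := @h u; simp only [mem_union, mem_sdiff, mem_univ]; tauto
    · rw [disjoint_left]; intro u; simp only [mem_sdiff, mem_univ]; tauto
  have e4 : ∑ z ∈ T \ S, gg G S T z = 15 * ((T \ S).card : ℤ) + ∑ z ∈ T \ S, (bn G S z : ℤ)
      - ∑ z ∈ T \ S, bw (wn G T z) := by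
    unfold gg
    rw [sum_sub_distrib, sum_add_distrib]; simp [mul_comm]
  have e5 : ∑ z ∈ T \ S, (bn G S z : ℤ)
      = ∑ y ∈ S, (((T \ S).filter (fun z => G.Adj y z)).card : ℤ) := by
    have : ∀ z, bn G S z = ∑ y ∈ S, if G.Adj y z then 1 else 0 := by
      intro z; unfold bn
      rw [← card_filter]; congr 1; ext u; simp [mem_bN, G.adj_comm]
    simp only [this, card_filter]
    push_cast
    rw [sum_comm]
  have e6 : ∑ v ∈ S, bw (wn G S v) = ∑ v ∈ S, bw (wn G T v) +
      ∑ y ∈ S, (((T \ S).filter (fun z => G.Adj y z)).card : ℤ) +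
      5 * ((S.filter (fun y => wn G S y ≠ 0 ∧ wn G T y = 0)).card : ℤ) := by
    rw [card_filter]; push_cast; rw [mul_sum, ← sum_add_distrib, ← sum_add_distrib]
    apply sum_congr rfl
    intro y _
    have := wn_add (G := G) h y
    unfold bw
    split_ifs <;> omega
  rw [e1, e2, e3, e4, e5, e6]; ring

/-- phase 1 condition -/
def PC (G : SimpleGraph V) (S : Finset V) : Prop :=
  (∀ v, v ∉ S → wn G S v ≤ 3) ∧ (∀ v, v ∈ S → wn G S v ≤ 4)

lemma PC.mono (hP : PC G S) (h : S ⊆ T) : PC G T := by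
  constructor
  · intro v hv; exact (wn_anti h v).trans (hP.1 v (fun h' => hv (h h')))
  · intro v hv
    refine (wn_anti h v).trans ?_
    by_cases hs : v ∈ S
    · exact hP.2 v hs
    · have := hP.1 v hs; omega

lemma gg_lb (z : V) : 10 + (bn G S z : ℤ) - wn G T z ≤ gg G S T z := by
  unfold gg; have := bw_le (wn G T z); omega
lemma gg_zero (z : V) (h : wn G T z = 0) : gg G S T z = 15 + bn G S z := by
  unfold gg; rw [h, bw_zero]; omega

lemma gain_lb (hP : PC G S) (h : S ⊆ T) (X Y : Finset V) (hX : X ⊆ T \ S)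
    (hY : ∀ y ∈ Y, y ∈ S ∧ wn G S y ≠ 0 ∧ wn G T y = 0) :
    Phi G T + ∑ z ∈ X, gg G S T z + 5 * (Y.card : ℤ) ≤ Phi G S := by
  rw [phi_eq h]
  have a1 : ∑ z ∈ X, gg G S T z ≤ ∑ z ∈ T \ S, gg G S T z := by
    apply sum_le_sum_of_subset_of_nonneg hX
    intro i hi _
    have := hP.1 i (mem_sdiff.mp hi).2
    have := wn_anti (G := G) h i
    have := gg_lb (G := G) (S := S) (T := T) i
    omega
  have a2 : Y.card ≤ (S.filter (fun y => wn G S y ≠ 0 ∧ wn G T y = 0)).card := by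
    apply card_le_card; intro y hy; rw [mem_filter]; exact hY y hy
  have : (Y.card : ℤ) ≤ ((S.filter (fun y => wn G S y ≠ 0 ∧ wn G T y = 0)).card : ℤ) := by
    exact_mod_cast a2
  linarith

/-- basic facts about playing -/
lemma sub_play (v : V) : S ⊆ S ∪ cN G v := subset_union_left
lemma mem_play {v u : V} (h : u = v ∨ G.Adj v u) (hu : u ∉ S) : u ∈ (S ∪ cN G v) \ S := by
  simp [mem_cN, h, hu]
lemma wn_play (v : V) : wn G (S ∪ cN G v) v = 0 := by
  unfold wn; rw [card_eq_zero, eq_empty_iff_forall_notMem]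
  intro u hu; rw [mem_wN, mem_union, mem_cN] at hu; tauto
lemma wn_pos {u v : V} (h : G.Adj u v) (hv : v ∉ S) : 1 ≤ wn G S u := by
  apply card_pos.mpr; exact ⟨v, mem_wN.mpr ⟨hv, h⟩⟩
lemma bn_pos {u v : V} (h : G.Adj v u) (hu : u ∈ S) : 1 ≤ bn G S v := by
  apply card_pos.mpr; exact ⟨u, mem_bN.mpr ⟨hu, h⟩⟩
lemma two_le {A : Finset V} {a b : V} (ha : a ∈ A) (hb : b ∈ A) (h : a ≠ b) : 2 ≤ A.card := by
  apply one_lt_card.mpr; exact ⟨a, ha, b, hb, h⟩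
lemma wn_two {u v w : V} (h : G.Adj u v) (hv : v ∉ S) (h' : G.Adj u w) (hw : w ∉ S) (hne : v ≠ w) :
    2 ≤ wn G S u := two_le (mem_wN.mpr ⟨hv, h⟩) (mem_wN.mpr ⟨hw, h'⟩) hne
lemma bn_two {u v w : V} (h : G.Adj u v) (hv : v ∈ S) (h' : G.Adj u w) (hw : w ∈ S) (hne : v ≠ w) :
    2 ≤ bn G S u := two_le (mem_bN.mpr ⟨hv, h⟩) (mem_bN.mpr ⟨hw, h'⟩) hne
lemma wn_dec {v u : V} (h : S ⊆ T) (hu : u ∈ T \ S) (ha : G.Adj v u) :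
    wn G T v + 1 ≤ wn G S v := by
  simpa using wn_sub h v {u} (by simpa using hu) (by simpa using ha)
lemma wn_dec2 {v u w : V} (h : S ⊆ T) (hu : u ∈ T \ S) (ha : G.Adj v u)
    (hw : w ∈ T \ S) (hb : G.Adj v w) (hne : u ≠ w) :
    wn G T v + 2 ≤ wn G S v := by
  have := wn_sub h v {u, w} (by intro x hx; simp only [mem_insert, mem_singleton] at hx; rcases hx with rfl | rfl <;> assumption)
    (by intro x hx; simp only [mem_insert, mem_singleton] at hx; rcases hx with rfl | rfl <;> assumption)
  rwa [card_pair hne] at this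

lemma gain1 (hP : PC G S) (h : S ⊆ T) {a : V} (ha : a ∈ T \ S) :
    Phi G T + gg G S T a ≤ Phi G S := by
  simpa using gain_lb hP h {a} ∅ (by simpa using ha) (by simp)
lemma gain1' (hP : PC G S) (h : S ⊆ T) {a y : V} (ha : a ∈ T \ S)
    (hy : y ∈ S ∧ wn G S y ≠ 0 ∧ wn G T y = 0) :
    Phi G T + gg G S T a + 5 ≤ Phi G S := by
  simpa using gain_lb hP h {a} {y} (by simpa using ha) (by simpa using hy)
lemma sub2 {A : Finset V} {a b : V} (ha : a ∈ A) (hb : b ∈ A) : ({a, b} : Finset V) ⊆ A := by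
  intro x hx; simp only [mem_insert, mem_singleton] at hx; rcases hx with rfl | rfl <;> assumption
lemma sub3 {A : Finset V} {a b c : V} (ha : a ∈ A) (hb : b ∈ A) (hc : c ∈ A) :
    ({a, b, c} : Finset V) ⊆ A := by
  intro x hx; simp only [mem_insert, mem_singleton] at hx
  rcases hx with rfl | rfl | rfl <;> assumption
lemma sub4 {A : Finset V} {a b c d : V} (ha : a ∈ A) (hb : b ∈ A) (hc : c ∈ A) (hd : d ∈ A) :
    ({a, b, c, d} : Finset V) ⊆ A := by
  intro x hx; simp only [mem_insert, mem_singleton] at hx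
  rcases hx with rfl | rfl | rfl | rfl <;> assumption
lemma gain2 (hP : PC G S) (h : S ⊆ T) {a b : V} (ha : a ∈ T \ S) (hb : b ∈ T \ S) (hab : a ≠ b) :
    Phi G T + (gg G S T a + gg G S T b) ≤ Phi G S := by
  have := gain_lb hP h {a, b} ∅ (sub2 ha hb) (by simp)
  rw [sum_pair hab] at this; simpa using this
lemma gain2' (hP : PC G S) (h : S ⊆ T) {a b y : V} (ha : a ∈ T \ S) (hb : b ∈ T \ S) (hab : a ≠ b)
    (hy : y ∈ S ∧ wn G S y ≠ 0 ∧ wn G T y = 0) :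
    Phi G T + (gg G S T a + gg G S T b) + 5 ≤ Phi G S := by
  have := gain_lb hP h {a, b} {y} (sub2 ha hb) (by simpa using hy)
  rw [sum_pair hab] at this; simpa using this
lemma gain3 (hP : PC G S) (h : S ⊆ T) {a b c : V} (ha : a ∈ T \ S) (hb : b ∈ T \ S)
    (hc : c ∈ T \ S) (hab : a ≠ b) (hac : a ≠ c) (hbc : b ≠ c) :
    Phi G T + (gg G S T a + (gg G S T b + gg G S T c)) ≤ Phi G S := by
  have := gain_lb hP h {a, b, c} ∅ (sub3 ha hb hc) (by simp)
  rw [sum_insert (by simp [hab, hac]), sum_pair hbc] at this; simpa using this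
lemma gain3' (hP : PC G S) (h : S ⊆ T) {a b c y : V} (ha : a ∈ T \ S) (hb : b ∈ T \ S)
    (hc : c ∈ T \ S) (hab : a ≠ b) (hac : a ≠ c) (hbc : b ≠ c)
    (hy : y ∈ S ∧ wn G S y ≠ 0 ∧ wn G T y = 0) :
    Phi G T + (gg G S T a + (gg G S T b + gg G S T c)) + 5 ≤ Phi G S := by
  have := gain_lb hP h {a, b, c} {y} (sub3 ha hb hc) (by simpa using hy)
  rw [sum_insert (by simp [hab, hac]), sum_pair hbc] at this; simpa using this
lemma gain4 (hP : PC G S) (h : S ⊆ T) {a b c d : V} (ha : a ∈ T \ S) (hb : b ∈ T \ S)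
    (hc : c ∈ T \ S) (hd : d ∈ T \ S) (hab : a ≠ b) (hac : a ≠ c) (had : a ≠ d)
    (hbc : b ≠ c) (hbd : b ≠ d) (hcd : c ≠ d) :
    Phi G T + (gg G S T a + (gg G S T b + (gg G S T c + gg G S T d))) ≤ Phi G S := by
  have := gain_lb hP h {a, b, c, d} ∅ (sub4 ha hb hc hd) (by simp)
  rw [sum_insert (by simp [hab, hac, had]), sum_insert (by simp [hbc, hbd]), sum_pair hcd] at this
  simpa using this
lemma gain4' (hP : PC G S) (h : S ⊆ T) {a b c d y : V} (ha : a ∈ T \ S) (hb : b ∈ T \ S)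
    (hc : c ∈ T \ S) (hd : d ∈ T \ S) (hab : a ≠ b) (hac : a ≠ c) (had : a ≠ d)
    (hbc : b ≠ c) (hbd : b ≠ d) (hcd : c ≠ d)
    (hy : y ∈ S ∧ wn G S y ≠ 0 ∧ wn G T y = 0) :
    Phi G T + (gg G S T a + (gg G S T b + (gg G S T c + gg G S T d))) + 5 ≤ Phi G S := by
  have := gain_lb hP h {a, b, c, d} {y} (sub4 ha hb hc hd) (by simpa using hy)
  rw [sum_insert (by simp [hab, hac, had]), sum_insert (by simp [hbc, hbd]), sum_pair hcd] at this
  simpa using this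

/-- Staller's move classification -/
lemma SC (hP : PC G S) (u : V) (hu : ¬ cN G u ⊆ S) :
    Phi G (S ∪ cN G u) + 21 ≤ Phi G S ∨
    (∃ z, z ∉ S ∧ wn G S z = 0 ∧ Phi G (S ∪ cN G u) + 15 + bn G S z ≤ Phi G S) ∨
    (∃ z, z ∉ S ∧ u ∈ S ∧ G.Adj u z ∧ wn G S u = 1 ∧
      Phi G (S ∪ cN G u) + 15 + bn G S z - wn G S z ≤ Phi G S) := by
  have hsub := sub_play (G := G) (S := S) u
  have h0 := wn_play (G := G) (S := S) u
  by_cases huS : u ∈ S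
  · obtain ⟨z, hz, hzS⟩ := not_subset.mp hu
    rw [mem_cN] at hz
    have hz : G.Adj u z := by
      rcases hz with rfl | hz
      · exact absurd huS hzS
      · exact hz
    have hY : u ∈ S ∧ wn G S u ≠ 0 ∧ wn G (S ∪ cN G u) u = 0 :=
      ⟨huS, by have := wn_pos hz hzS; omega, h0⟩
    by_cases h1 : wn G S u = 1
    · right; right
      refine ⟨z, hzS, huS, hz, h1, ?_⟩
      have := gain1' hP hsub (mem_play (Or.inr hz) hzS) hY
      have := gg_lb (G := G) (S := S) (T := S ∪ cN G u) z
      have := wn_anti (G := G) hsub z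
      omega
    · left
      have : 1 < (wN G S u).card := by have := wn_pos hz hzS; unfold wn at *; omega
      obtain ⟨a, ha, b, hb, hab⟩ := one_lt_card.mp this
      rw [mem_wN] at ha hb
      have := gain2' hP hsub (mem_play (Or.inr ha.2) ha.1) (mem_play (Or.inr hb.2) hb.1) hab hY
      have := gg_lb (G := G) (S := S) (T := S ∪ cN G u) a
      have := gg_lb (G := G) (S := S) (T := S ∪ cN G u) b
      have := wn_anti (G := G) hsub a
      have := wn_anti (G := G) hsub b
      have := hP.1 a ha.1
      have := hP.1 b hb.1
      have := bn_pos ha.2.symm huS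
      have := bn_pos hb.2.symm huS
      omega
  · have huZ := mem_play (G := G) (Or.inl (rfl : u = u)) huS
    by_cases h1 : wn G S u = 0
    · right; left
      refine ⟨u, huS, h1, ?_⟩
      have := gain1 hP hsub huZ
      have := gg_zero (S := S) u h0
      omega
    · left
      obtain ⟨a, ha⟩ := card_ne_zero.mp h1
      rw [mem_wN] at ha
      have haZ := mem_play (Or.inr ha.2) ha.1
      have := gain2 hP hsub huZ haZ ha.2.ne
      have := gg_zero (S := S) u h0
      have := gg_lb (G := G) (S := S) (T := S ∪ cN G u) a
      have := wn_dec hsub huZ ha.2.symm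
      have := hP.1 a ha.1
      omega


def Good (G : SimpleGraph V) (S : Finset V) : Prop :=
  ∃ v, ¬ cN G v ⊆ S ∧ Phi G (S ∪ cN G v) + 27 ≤ Phi G S ∧
    ∀ u, ¬ cN G u ⊆ S ∪ cN G v → Phi G (S ∪ cN G v ∪ cN G u) + 54 ≤ Phi G S

lemma good_of (v : V) (hv : ¬ cN G v ⊆ S) (m : ℤ) (hm : 27 ≤ m)
    (h1 : Phi G (S ∪ cN G v) + m ≤ Phi G S)
    (h2 : ∀ u, ¬ cN G u ⊆ S ∪ cN G v →
      Phi G (S ∪ cN G v ∪ cN G u) + (54 - m) ≤ Phi G (S ∪ cN G v)) : Good G S :=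
  ⟨v, hv, by linarith, fun u hu => by have := h2 u hu; linarith⟩

lemma legal {v u : V} (h : u = v ∨ G.Adj v u) (hu : u ∉ S) : ¬ cN G v ⊆ S :=
  fun h' => hu (h' (mem_cN.mpr h))

lemma S13 (hP : PC G S) (u : V) (hu : ¬ cN G u ⊆ S) : Phi G (S ∪ cN G u) + 13 ≤ Phi G S := by
  rcases SC hP u hu with h | ⟨z, hz, h0, h⟩ | ⟨z, hz, huS, ha, h1, h⟩
  · omega
  · omega
  · have := hP.1 z hz
    have := bn_pos ha.symm huS
    omega

/-- in a state `T ⊇ S`, an apex in `S` of an edge which is white in `T` differs from a leaf. -/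
lemma bn_apex (h : S ⊆ T) {z s r u : V} (hz : z ∉ T) (hs : s ∉ T) (hzs : G.Adj z s)
    (hr : r ∈ S) (hrz : G.Adj z r) (hrs : G.Adj s r) (huT : u ∈ T) (ha : G.Adj u z)
    (h1 : wn G T u = 1) : 2 ≤ bn G T z := by
  apply bn_two ha.symm huT hrz (h hr)
  rintro rfl
  have := wn_two ha hz hrs.symm hs hzs.ne
  omega

lemma caseA (hP : PC G S) (hT : ∀ u v, G.Adj u v → ∃ w, G.Adj u w ∧ G.Adj v w)
    {v0 : V} (hv0 : v0 ∉ S) (hw0 : wn G S v0 = 3) : Good G S := by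
  by_cases hA1 : ∃ t, t ∉ S ∧ wn G S t = 3 ∧ ∀ s r, s ∉ S → G.Adj t s → r ∈ S → G.Adj t r →
      ¬ G.Adj s r
  · obtain ⟨t, ht, hw, hno⟩ := hA1
    obtain ⟨a, b, c, hab, hac, hbc, he⟩ := card_eq_three.mp hw
    have hm : ∀ x, x ∈ wN G S t ↔ x = a ∨ x = b ∨ x = c := by intro x; rw [he]; simp
    have hsub := sub_play (G := G) (S := S) t
    have htZ := mem_play (G := G) (Or.inl (rfl : t = t)) ht
    have key : ∀ x, x ∈ wN G S t → x ∈ (S ∪ cN G t) \ S ∧ t ≠ x ∧ 9 ≤ gg G S (S ∪ cN G t) x := by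
      intro x hx
      rw [mem_wN] at hx
      refine ⟨mem_play (Or.inr hx.2) hx.1, hx.2.ne, ?_⟩
      obtain ⟨r, hr1, hr2⟩ := hT _ _ hx.2
      have hrS : r ∉ S := fun h => hno x r hx.1 hx.2 h hr1 hr2
      have := wn_dec2 hsub htZ hx.2.symm (mem_play (Or.inr hr1) hrS) hr2 hr1.ne
      have := hP.1 x hx.1
      have := gg_lb (G := G) (S := S) (T := S ∪ cN G t) x
      omega
    obtain ⟨a1, a2, a3⟩ := key a ((hm a).2 (by simp))
    obtain ⟨b1, b2, b3⟩ := key b ((hm b).2 (by simp))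
    obtain ⟨c1, c2, c3⟩ := key c ((hm c).2 (by simp))
    refine good_of t (legal (Or.inl rfl) ht) 41 (by norm_num) ?_ ?_
    · have := gain4 hP hsub htZ a1 b1 c1 a2 b2 c2 hab hac hbc
      have := gg_zero (G := G) (S := S) t (wn_play (S := S) t)
      omega
    · intro u hu
      have := S13 (hP.mono hsub) u hu
      omega
  push Not at hA1
  -- Staller gains at least 14 anyway
  have S14 : ∀ T, S ⊆ T → ∀ u z, z ∉ T → u ∈ T → G.Adj u z → wn G T u = 1 → wn G T z = 3 →
      2 ≤ bn G T z := by
    intro T hST u z hz huT ha h1 h3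
    have hzS : z ∉ S := fun h => hz (hST h)
    have h3' : wn G S z = 3 := by
      have := wn_anti (G := G) hST z; have := hP.1 z hzS; omega
    obtain ⟨s, r, hs, hzs, hr, hzr, hsr⟩ := hA1 z hzS h3'
    have heq : wN G T z = wN G S z := eq_of_subset_of_card_le (wN_anti hST z) (by
      unfold wn at *; omega)
    have hsT : s ∉ T := by
      have : s ∈ wN G T z := by rw [heq, mem_wN]; exact ⟨hs, hzs⟩
      exact (mem_wN.mp this).1
    exact bn_apex hST hz hsT hzs hr hzr hsr huT ha h1
  have Sall : ∀ T, S ⊆ T → ∀ u, ¬ cN G u ⊆ T → Phi G (T ∪ cN G u) + 15 ≤ Phi G T ∨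
      (Phi G (T ∪ cN G u) + 14 ≤ Phi G T ∧ u ∈ T ∧ wn G T u = 1 ∧
        ∃ z, z ∉ T ∧ G.Adj u z ∧ 2 ≤ wn G T z) := by
    intro T hST u hu
    have hPT := hP.mono hST
    rcases SC hPT u hu with h | ⟨z, hz, h0, h⟩ | ⟨z, hz, huS, ha, h1, h⟩
    · left; omega
    · left; omega
    · have b1 := bn_pos ha.symm huS
      have b2 := hPT.1 z hz
      by_cases h2 : 2 ≤ wn G T z
      · right
        refine ⟨?_, huS, h1, z, hz, ha, h2⟩
        by_cases h3 : wn G T z = 3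
        · have := S14 T hST u z hz huS ha h1 h3
          omega
        · omega
      · left; omega
  by_cases hA2 : ∃ l t, l ∈ S ∧ t ∉ S ∧ G.Adj l t ∧ wn G S l = 1 ∧ 2 ≤ wn G S t
  · obtain ⟨l, t, hl, ht, hlt, hl1, ht2⟩ := hA2
    have hsub := sub_play (G := G) (S := S) t
    have htZ := mem_play (G := G) (Or.inl (rfl : t = t)) ht
    have hl0 : wn G (S ∪ cN G t) l = 0 := by have := wn_dec hsub htZ hlt; omega
    have hY : l ∈ S ∧ wn G S l ≠ 0 ∧ wn G (S ∪ cN G t) l = 0 := ⟨hl, by omega, hl0⟩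
    have gt := gg_zero (G := G) (S := S) t (wn_play (S := S) t)
    have bt := bn_pos hlt.symm hl
    refine good_of t (legal (Or.inl rfl) ht) 40 (by norm_num) ?_ ?_
    · have ht3 := hP.1 t ht
      have key : ∀ x, x ∈ wN G S t → x ∈ (S ∪ cN G t) \ S ∧ t ≠ x ∧ 8 ≤ gg G S (S ∪ cN G t) x := by
        intro x hx
        rw [mem_wN] at hx
        refine ⟨mem_play (Or.inr hx.2) hx.1, hx.2.ne, ?_⟩
        have := wn_dec hsub htZ hx.2.symm
        have := hP.1 x hx.1
        have := gg_lb (G := G) (S := S) (T := S ∪ cN G t) x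
        omega
      by_cases hw : wn G S t = 3
      · obtain ⟨a, b, c, hab, hac, hbc, he⟩ := card_eq_three.mp hw
        have hm : ∀ x, x ∈ wN G S t ↔ x = a ∨ x = b ∨ x = c := by intro x; rw [he]; simp
        obtain ⟨a1, a2, a3⟩ := key a ((hm a).2 (by simp))
        obtain ⟨b1, b2, b3⟩ := key b ((hm b).2 (by simp))
        obtain ⟨c1, c2, c3⟩ := key c ((hm c).2 (by simp))
        have := gain4' hP hsub htZ a1 b1 c1 a2 b2 c2 hab hac hbc hY
        omega
      · have hw2 : wn G S t = 2 := by omega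
        obtain ⟨a, b, hab, he⟩ := card_eq_two.mp hw2
        have hm : ∀ x, x ∈ wN G S t ↔ x = a ∨ x = b := by intro x; rw [he]; simp
        obtain ⟨a1, a2, -⟩ := key a ((hm a).2 (by simp))
        obtain ⟨b1, b2, -⟩ := key b ((hm b).2 (by simp))
        have ha := mem_wN.mp ((hm a).2 (by simp))
        have hb := mem_wN.mp ((hm b).2 (by simp))
        have hg := gain3' hP hsub htZ a1 b1 a2 b2 hab hY
        by_cases hadj : G.Adj a b
        · have key2 : ∀ x y, x ∉ S → G.Adj t x → y ∉ S → G.Adj t y → G.Adj x y →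
              10 ≤ gg G S (S ∪ cN G t) x := by
            intro x y hx htx hy hty hxy
            have d := wn_dec2 hsub htZ htx.symm (mem_play (Or.inr hty) hy) hxy hty.ne
            have := hP.1 x hx
            by_cases h3 : wn G S x = 3
            · obtain ⟨s, r, hs, hzs, hr, hzr, hsr⟩ := hA1 x hx h3
              have := bn_pos hzr hr
              have := gg_lb (G := G) (S := S) (T := S ∪ cN G t) x
              omega
            · have := gg_zero (G := G) (S := S) (T := S ∪ cN G t) x (by omega)
              omega
          have := key2 a b ha.1 ha.2 hb.1 hb.2 hadj
          have := key2 b a hb.1 hb.2 ha.1 ha.2 hadj.symm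
          omega
        · have key2 : ∀ x, x ∈ wN G S t → 9 ≤ gg G S (S ∪ cN G t) x ∧ 2 ≤ bn G S t := by
            intro x hx'
            have hx := mem_wN.mp hx'
            obtain ⟨r, hr1, hr2⟩ := hT _ _ hx.2
            have hrS : r ∈ S := by
              by_contra hrS
              have hr := (hm r).1 (mem_wN.mpr ⟨hrS, hr1⟩)
              rcases (hm x).1 hx' with rfl | rfl <;> rcases hr with rfl | rfl
              · exact hr2.ne rfl
              · exact hadj hr2
              · exact hadj hr2.symm
              · exact hr2.ne rfl
            refine ⟨?_, bn_apex (subset_refl S) ht hx.1 hx.2 hrS hr1 hr2 hl hlt hl1⟩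
            have := bn_pos hr2 hrS
            have := wn_dec hsub htZ hx.2.symm
            have := hP.1 x hx.1
            have := gg_lb (G := G) (S := S) (T := S ∪ cN G t) x
            omega
          have := key2 a ((hm a).2 (by simp))
          have := key2 b ((hm b).2 (by simp))
          omega
    · intro u hu
      rcases Sall _ hsub u hu with h | ⟨h, -⟩ <;> omega
  · push Not at hA2
    have hsub := sub_play (G := G) (S := S) v0
    have htZ := mem_play (G := G) (Or.inl (rfl : v0 = v0)) hv0
    have gt := gg_zero (G := G) (S := S) v0 (wn_play (S := S) v0)
    obtain ⟨a, b, c, hab, hac, hbc, he⟩ := card_eq_three.mp hw0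
    have hm : ∀ x, x ∈ wN G S v0 ↔ x = a ∨ x = b ∨ x = c := by intro x; rw [he]; simp
    have key : ∀ x, x ∈ wN G S v0 → x ∈ (S ∪ cN G v0) \ S ∧ v0 ≠ x ∧
        wn G (S ∪ cN G v0) x ≤ 2 ∧
        10 + (bn G S x : ℤ) - wn G (S ∪ cN G v0) x ≤ gg G S (S ∪ cN G v0) x := by
      intro x hx
      rw [mem_wN] at hx
      refine ⟨mem_play (Or.inr hx.2) hx.1, hx.2.ne, ?_⟩
      have := wn_dec hsub htZ hx.2.symm
      have := hP.1 x hx.1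
      have := gg_lb (G := G) (S := S) (T := S ∪ cN G v0) x
      omega
    obtain ⟨a1, a2, a3, a4⟩ := key a ((hm a).2 (by simp))
    obtain ⟨b1, b2, b3, b4⟩ := key b ((hm b).2 (by simp))
    obtain ⟨c1, c2, c3, c4⟩ := key c ((hm c).2 (by simp))
    have hg := gain4 hP hsub htZ a1 b1 c1 a2 b2 c2 hab hac hbc
    have hZ : ∀ x, x ∈ (S ∪ cN G v0) \ S → x = v0 ∨ x = a ∨ x = b ∨ x = c := by
      intro x hx
      simp only [mem_sdiff, mem_union, mem_cN] at hx
      rcases hx with ⟨h | h | h, h'⟩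
      · exact absurd h h'
      · exact Or.inl h
      · exact Or.inr ((hm x).1 (mem_wN.mpr ⟨h', h⟩))
    refine ⟨v0, legal (Or.inl rfl) hv0, by omega, ?_⟩
    intro u hu
    rcases Sall _ hsub u hu with h | ⟨h, huT, hu1, z, hz, huz, hz2⟩
    · omega
    · have hzS : z ∉ S := fun h => hz (hsub h)
      by_cases huS : u ∈ S
      · have hne : wn G S u ≠ 1 := by
          intro h1
          have := hA2 u z huS hzS huz h1
          have := wn_anti (G := G) hsub z
          omega
        have hadd := wn_add (G := G) hsub u
        have hpos := wn_pos huz hzS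
        have : 0 < (((S ∪ cN G v0) \ S).filter (fun z => G.Adj u z)).card := by omega
        obtain ⟨y, hy⟩ := card_pos.mp this
        rw [mem_filter] at hy
        have hb := bn_pos hy.2.symm huS
        rcases hZ y hy.1 with rfl | rfl | rfl | rfl <;> omega
      · rcases hZ u (mem_sdiff.mpr ⟨huT, huS⟩) with rfl | rfl | rfl | rfl
        · have := wn_play (G := G) (S := S) u; omega
        all_goals omega

lemma deg2 (hT : ∀ u v, G.Adj u v → ∃ w, G.Adj u w ∧ G.Adj v w) (hN : ∀ v, ∃ u, G.Adj v u)
    (S : Finset V) (v : V) : 2 ≤ wn G S v + bn G S v := by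
  obtain ⟨u, hu⟩ := hN v
  obtain ⟨w, hw, hw'⟩ := hT _ _ hu
  by_cases h1 : u ∈ S <;> by_cases h2 : w ∈ S
  · have := bn_two hu h1 hw h2 hw'.ne; omega
  · have := bn_pos hu h1; have := wn_pos hw h2; omega
  · have := wn_pos hu h1; have := bn_pos hw h2; omega
  · have := wn_two hu h1 hw h2 hw'.ne; omega

/-- Staller's gains when every white edge has its apexes dominated -/
lemma Sgain (hP : PC G S) (hT : ∀ u v, G.Adj u v → ∃ w, G.Adj u w ∧ G.Adj v w)
    (hN : ∀ v, ∃ u, G.Adj v u) (h2 : ∀ v, v ∉ S → wn G S v ≤ 2)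
    (hap : ∀ a b, a ∉ S → b ∉ S → G.Adj a b → ∃ r, r ∈ S ∧ G.Adj a r ∧ G.Adj b r)
    (hST : S ⊆ T) (u : V) (hu : ¬ cN G u ⊆ T) :
    Phi G (T ∪ cN G u) + 17 ≤ Phi G T ∨
    (∃ z, z ∉ T ∧ u ∈ T ∧ G.Adj u z ∧ wn G T u = 1 ∧ 1 ≤ wn G T z ∧
      Phi G (T ∪ cN G u) + 17 - wn G T z ≤ Phi G T) := by
  have hPT := hP.mono hST
  rcases SC hPT u hu with h | ⟨z, hz, h0, h⟩ | ⟨z, hz, huS, ha, h1, h⟩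
  · left; omega
  · left; have := deg2 hT hN T z; omega
  · by_cases h0 : wn G T z = 0
    · left; have := deg2 hT hN T z; omega
    · right
      refine ⟨z, hz, huS, ha, h1, by omega, ?_⟩
      obtain ⟨s, hs⟩ := card_ne_zero.mp h0
      rw [mem_wN] at hs
      obtain ⟨r, hr, h3, h4⟩ := hap z s (fun h => hz (hST h)) (fun h => hs.1 (hST h)) hs.2
      have := bn_apex hST hz hs.1 hs.2 hr h3 h4 huS ha h1
      omega

lemma play_blue (hP : PC G S) {x : V} (hx : x ∈ S) {m : ℤ} {k : ℕ} (hk : 1 ≤ k)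
    (hw : k ≤ wn G S x) (hm : 0 ≤ m)
    (h : ∀ z, z ∉ S → G.Adj x z → m ≤ gg G S (S ∪ cN G x) z) :
    Phi G (S ∪ cN G x) + m * k + 5 ≤ Phi G S := by
  have := gain_lb hP (sub_play (G := G) x) (wN G S x) {x}
    (by intro z hz; rw [mem_wN] at hz; exact mem_play (Or.inr hz.2) hz.1)
    (by intro y hy; rw [mem_singleton] at hy; subst hy; exact ⟨hx, by omega, wn_play y⟩)
  have h2 : m * k ≤ ∑ z ∈ wN G S x, gg G S (S ∪ cN G x) z := by
    calc m * k ≤ m * (wn G S x : ℤ) := by gcongr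
      _ = ∑ z ∈ wN G S x, m := by simp [wn, mul_comm]
      _ ≤ _ := by
        apply sum_le_sum; intro z hz; rw [mem_wN] at hz; exact h z hz.1 hz.2
  simp at this
  linarith

lemma legal_blue {x : V} (h : 1 ≤ wn G S x) : ¬ cN G x ⊆ S := by
  obtain ⟨z, hz⟩ := card_pos.mp h
  rw [mem_wN] at hz
  exact legal (Or.inr hz.2) hz.1

lemma caseB (hP : PC G S) (hT : ∀ u v, G.Adj u v → ∃ w, G.Adj u w ∧ G.Adj v w)
    (hN : ∀ v, ∃ u, G.Adj v u) (h2 : ∀ v, v ∉ S → wn G S v ≤ 2)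
    (hap : ∀ a b, a ∉ S → b ∉ S → G.Adj a b → ∃ r, r ∈ S ∧ G.Adj a r ∧ G.Adj b r)
    (htri : ∀ a b c, a ∉ S → b ∉ S → c ∉ S → G.Adj a b → G.Adj a c → ¬ G.Adj b c)
    {c0 : V} (hc0 : c0 ∉ S) (hw0 : wn G S c0 = 2) : Good G S := by
  have S15 : ∀ T, S ⊆ T → ∀ u, ¬ cN G u ⊆ T → Phi G (T ∪ cN G u) + 15 ≤ Phi G T := by
    intro T hST u hu
    rcases Sgain hP hT hN h2 hap hST u hu with h | ⟨z, hz, -, -, -, -, h⟩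
    · omega
    · have := h2 z (fun h => hz (hST h))
      have := wn_anti (G := G) hST z
      omega
  have fin : ∀ v, ¬ cN G v ⊆ S → Phi G (S ∪ cN G v) + 39 ≤ Phi G S → Good G S := by
    intro v hv hg
    refine good_of v hv 39 (by norm_num) hg ?_
    intro u hu
    have := S15 _ (sub_play v) u hu
    omega
  by_cases hB1 : ∃ x, x ∈ S ∧ 4 ≤ wn G S x
  · obtain ⟨x, hx, hx4⟩ := hB1
    apply fin x (legal_blue (by omega))
    have := play_blue hP hx (m := 9) (by norm_num) hx4 (by norm_num) (by
      intro z hz hxz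
      have := gg_lb (G := G) (S := S) (T := S ∪ cN G x) z
      have := bn_pos hxz.symm hx
      have := h2 z hz
      have := wn_anti (G := G) (sub_play (S := S) (G := G) x) z
      omega)
    norm_num at this
    linarith
  push Not at hB1
  have helper : ∀ c a b x, c ∉ S → a ∉ S → b ∉ S → x ∈ S → G.Adj c a → G.Adj c b → a ≠ b →
      G.Adj x a → G.Adj x b → G.Adj x c → Good G S := by
    intro c a b x hc ha hb hx hca hcb hab hxa hxb hxc
    apply fin c (legal (Or.inl rfl) hc)
    have hsub := sub_play (G := G) (S := S) c
    have hcZ := mem_play (G := G) (Or.inl (rfl : c = c)) hc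
    have haZ := mem_play (G := G) (Or.inr hca) ha
    have hbZ := mem_play (G := G) (Or.inr hcb) hb
    have hx3 := hB1 x hx
    have hs := wn_sub hsub x {c, a, b} (sub3 hcZ haZ hbZ) (by
      intro y hy; simp only [mem_insert, mem_singleton] at hy
      rcases hy with rfl | rfl | rfl <;> assumption)
    rw [card_eq_three.mpr ⟨c, a, b, hca.ne, hcb.ne, hab, rfl⟩] at hs
    have := gain3' hP hsub hcZ haZ hbZ hca.ne hcb.ne hab (y := x) ⟨hx, by omega, by omega⟩
    have := gg_zero (G := G) (S := S) c (wn_play (S := S) c)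
    have := gg_lb (G := G) (S := S) (T := S ∪ cN G c) a
    have := gg_lb (G := G) (S := S) (T := S ∪ cN G c) b
    have := wn_dec hsub hcZ hca.symm
    have := wn_dec hsub hcZ hcb.symm
    have := h2 a ha
    have := h2 b hb
    have := bn_pos hxa.symm hx
    have := bn_pos hxb.symm hx
    have := bn_pos hxc.symm hx
    omega
  obtain ⟨a, b, hab, he⟩ := card_eq_two.mp hw0
  have ha := mem_wN.mp (show a ∈ wN G S c0 by rw [he]; simp)
  have hb := mem_wN.mp (show b ∈ wN G S c0 by rw [he]; simp)
  obtain ⟨x, hx, hcx, hax⟩ := hap _ _ hc0 ha.1 ha.2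
  obtain ⟨y, hy, hcy, hby⟩ := hap _ _ hc0 hb.1 hb.2
  by_cases hxy : x = y
  · subst hxy
    exact helper c0 a b x hc0 ha.1 hb.1 hx ha.2 hb.2 hab hax.symm hby.symm hcx.symm
  have hsub := sub_play (G := G) (S := S) c0
  have hcZ := mem_play (G := G) (Or.inl (rfl : c0 = c0)) hc0
  have key : ∀ a x, a ∉ S → G.Adj c0 a → x ∈ S → G.Adj c0 x → G.Adj a x →
      Good G S ∨ 11 ≤ gg G S (S ∪ cN G c0) a := by
    intro a x ha hca hx hcx hax
    have d := wn_dec hsub hcZ hca.symm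
    have b1 := bn_pos hax hx
    have h2a := h2 a ha
    by_cases h0 : wn G (S ∪ cN G c0) a = 0
    · right
      have := gg_zero (G := G) (S := S) a h0
      omega
    · obtain ⟨a', ha'⟩ := card_ne_zero.mp h0
      rw [mem_wN] at ha'
      have ha'S : a' ∉ S := fun h => ha'.1 (hsub h)
      have hne : c0 ≠ a' := by
        rintro rfl; exact ha'.1 (mem_sdiff.mp hcZ).1
      obtain ⟨z, hz, haz, ha'z⟩ := hap a a' ha ha'S ha'.2
      by_cases hzx : z = x
      · subst hzx
        left
        exact helper a c0 a' z ha hc0 ha'S hx hca.symm ha'.2 hne hcx.symm ha'z.symm hax.symm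
      · right
        have := bn_two haz hz hax hx hzx
        have := gg_lb (G := G) (S := S) (T := S ∪ cN G c0) a
        omega
  rcases key a x ha.1 ha.2 hx hcx hax with h | g1
  · exact h
  rcases key b y hb.1 hb.2 hy hcy hby with h | g2
  · exact h
  apply fin c0 (legal (Or.inl rfl) hc0)
  have := gain3 hP hsub hcZ (mem_play (Or.inr ha.2) ha.1) (mem_play (Or.inr hb.2) hb.1)
    ha.2.ne hb.2.ne hab
  have := gg_zero (G := G) (S := S) c0 (wn_play (S := S) c0)
  have := bn_two hcx hx hcy hy hxy
  omega

lemma caseC (hP : PC G S) (hT : ∀ u v, G.Adj u v → ∃ w, G.Adj u w ∧ G.Adj v w)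
    (hN : ∀ v, ∃ u, G.Adj v u) (h1 : ∀ v, v ∉ S → wn G S v ≤ 1)
    (hap : ∀ a b, a ∉ S → b ∉ S → G.Adj a b → ∃ r, r ∈ S ∧ G.Adj a r ∧ G.Adj b r)
    {u v : V} (hu : u ∉ S) (hv : v ∉ S) (huv : G.Adj u v) : Good G S := by
  have Sg := fun T hST u hu => Sgain (T := T) hP hT hN (fun v hv => (h1 v hv).trans (by norm_num))
    hap hST u hu
  have S16 : ∀ T, S ⊆ T → ∀ u, ¬ cN G u ⊆ T → Phi G (T ∪ cN G u) + 16 ≤ Phi G T := by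
    intro T hST u hu
    rcases Sg T hST u hu with h | ⟨z, hz, -, -, -, -, h⟩
    · omega
    · have := h1 z (fun h => hz (hST h))
      have := wn_anti (G := G) hST z
      omega
  have fin : ∀ v, ¬ cN G v ⊆ S → Phi G (S ∪ cN G v) + 38 ≤ Phi G S → Good G S := by
    intro v hv hg
    refine good_of v hv 38 (by norm_num) hg ?_
    intro u hu
    have := S16 _ (sub_play v) u hu
    omega
  have key : ∀ t s, t ∉ S → s ∉ S → G.Adj t s → wn G (S ∪ cN G t) s = 0 ∧
      gg G S (S ∪ cN G t) t = 15 + bn G S t ∧ gg G S (S ∪ cN G t) s = 15 + bn G S s := by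
    intro t s ht hs hts
    have hsub := sub_play (G := G) (S := S) t
    have htZ := mem_play (G := G) (Or.inl (rfl : t = t)) ht
    have := wn_dec hsub htZ hts.symm
    have := h1 s hs
    exact ⟨by omega, gg_zero t (wn_play t), gg_zero s (by omega)⟩
  by_cases hl : ∃ l t s, l ∈ S ∧ t ∉ S ∧ s ∉ S ∧ G.Adj l t ∧ G.Adj t s ∧ wn G S l = 1
  · obtain ⟨l, t, s, hl, ht, hs, hlt, hts, hl1⟩ := hl
    obtain ⟨k1, k2, k3⟩ := key t s ht hs hts
    have hsub := sub_play (G := G) (S := S) t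
    have htZ := mem_play (G := G) (Or.inl (rfl : t = t)) ht
    obtain ⟨r, hr, hr1, hr2⟩ := hap t s ht hs hts
    have := bn_apex (subset_refl S) ht hs hts hr hr1 hr2 hl hlt hl1
    have := bn_pos hr2 hr
    have := wn_dec hsub htZ hlt
    have := gain2' hP hsub htZ (mem_play (Or.inr hts) hs) hts.ne (y := l) ⟨hl, by omega, by omega⟩
    exact fin t (legal (Or.inl rfl) ht) (by omega)
  push Not at hl
  obtain ⟨x, hx, hux, hvx⟩ := hap u v hu hv huv
  have hsx := sub_play (G := G) (S := S) x
  have x2 := wn_two hux.symm hu hvx.symm hv huv.ne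
  by_cases hx3 : wn G S x = 2
  · have hsub := sub_play (G := G) (S := S) u
    have huZ := mem_play (G := G) (Or.inl (rfl : u = u)) hu
    have hvZ := mem_play (G := G) (Or.inr huv) hv
    have hx0 := wn_dec2 hsub huZ hux.symm hvZ hvx.symm huv.ne
    obtain ⟨k1, k2, k3⟩ := key u v hu hv huv
    have hg := gain2' hP hsub huZ hvZ huv.ne (y := x) ⟨hx, by omega, by omega⟩
    have b1 := bn_pos hux hx
    have b2 := bn_pos hvx hx
    refine ⟨u, legal (Or.inl rfl) hu, by omega, ?_⟩
    intro l hlegal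
    have g16 := S16 _ hsub l hlegal
    rcases Sg _ hsub l hlegal with h | ⟨z, hz, hlT, hlz, hl1, hz1, h⟩
    · omega
    · have hzS : z ∉ S := fun h => hz (hsub h)
      obtain ⟨s, hs⟩ := card_pos.mp hz1
      rw [mem_wN] at hs
      have hsS : s ∉ S := fun h => hs.1 (hsub h)
      have hZ : ∀ y, y ∈ (S ∪ cN G u) \ S → y = u ∨ y = v := by
        intro y hy
        simp only [mem_sdiff, mem_union, mem_cN] at hy
        rcases hy with ⟨h | h | h, h'⟩
        · exact absurd h h'
        · exact Or.inl h
        · right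
          by_contra hne
          have := wn_two h h' huv hv hne
          have := h1 u hu
          omega
      by_cases hlS : l ∈ S
      · have hne := hl l z s hlS hzS hsS hlz hs.2
        have hadd := wn_add (G := G) hsub l
        have hpos := wn_pos hlz hzS
        have : 0 < (((S ∪ cN G u) \ S).filter (fun z => G.Adj l z)).card := by omega
        obtain ⟨y, hy⟩ := card_pos.mp this
        rw [mem_filter] at hy
        have hlx : l ≠ x := by rintro rfl; omega
        rcases hZ y hy.1 with rfl | rfl
        · have := bn_two hy.2.symm hlS hux hx hlx; omega
        · have := bn_two hy.2.symm hlS hvx hx hlx; omega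
      · exfalso
        rcases hZ l (mem_sdiff.mpr ⟨hlT, hlS⟩) with rfl | rfl
        · have := wn_play (G := G) (S := S) l; omega
        · omega
  · obtain ⟨w, hw⟩ : ((wN G S x).erase u |>.erase v).Nonempty := by
      apply card_pos.mp
      have e1 := pred_card_le_card_erase (s := wN G S x) (a := u)
      have e2 := pred_card_le_card_erase (s := (wN G S x).erase u) (a := v)
      unfold wn at *
      omega
    simp only [mem_erase, mem_wN] at hw
    obtain ⟨hwv, hwu, hwS, hxw⟩ := hw
    apply fin x (legal_blue (by omega))
    have hsub := sub_play (G := G) (S := S) x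
    have huZ := mem_play (G := G) (Or.inr hux.symm) hu
    have hvZ := mem_play (G := G) (Or.inr hvx.symm) hv
    have hwZ := mem_play (G := G) (Or.inr hxw) hwS
    have := gain3' hP hsub huZ hvZ hwZ huv.ne hwu.symm hwv.symm (y := x)
      ⟨hx, by omega, wn_play x⟩
    have := wn_dec hsub hvZ huv
    have := wn_dec hsub huZ huv.symm
    have := h1 u hu
    have := h1 v hv
    have := h1 w hwS
    have := wn_anti (G := G) hsub w
    have := gg_zero (G := G) (S := S) (T := S ∪ cN G x) u (by omega)
    have := gg_zero (G := G) (S := S) (T := S ∪ cN G x) v (by omega)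
    have := gg_lb (G := G) (S := S) (T := S ∪ cN G x) w
    omega

lemma leaf_gain (hP : PC G S) (hT : ∀ u v, G.Adj u v → ∃ w, G.Adj u w ∧ G.Adj v w)
    (hN : ∀ v, ∃ u, G.Adj v u) (h0 : ∀ v, v ∉ S → wn G S v = 0)
    (h1 : ∀ y, y ∈ S → wn G S y ≤ 1) (u : V) (hu : ¬ cN G u ⊆ S) :
    Phi G (S ∪ cN G u) + 27 ≤ Phi G S := by
  obtain ⟨z, hz, hzS⟩ := not_subset.mp hu
  rw [mem_cN] at hz
  have hsub := sub_play (G := G) (S := S) u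
  have hzZ := mem_play hz hzS
  have := gain_lb hP hsub {z} (bN G S z) (by simpa using hzZ) (by
    intro y hy
    rw [mem_bN] at hy
    have := wn_dec hsub hzZ hy.2.symm
    have := h1 y hy.1
    exact ⟨hy.1, by omega, by omega⟩)
  rw [sum_singleton] at this
  have e := wn_anti (G := G) hsub z
  rw [h0 z hzS] at e
  have := gg_zero (G := G) (S := S) (T := S ∪ cN G u) z (by omega)
  have := deg2 hT hN S z
  have := h0 z hzS
  have : (bN G S z).card = bn G S z := rfl
  omega

lemma caseD (hP : PC G S) (hT : ∀ u v, G.Adj u v → ∃ w, G.Adj u w ∧ G.Adj v w)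
    (hN : ∀ v, ∃ u, G.Adj v u) (h0 : ∀ v, v ∉ S → wn G S v = 0)
    {v : V} (hv : v ∉ S) : Good G S := by
  by_cases hy : ∃ y, y ∈ S ∧ 2 ≤ wn G S y
  · obtain ⟨y, hy, hy2⟩ := hy
    refine good_of y (legal_blue (by omega)) 39 (by norm_num) ?_ ?_
    · have := play_blue hP hy (m := 17) (by norm_num) hy2 (by norm_num) (by
        intro z hz hxz
        have e := wn_anti (G := G) (sub_play (S := S) (G := G) y) z
        have := h0 z hz
        have := gg_zero (G := G) (S := S) (T := S ∪ cN G y) z (by omega)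
        have := deg2 hT hN S z
        omega)
      norm_num at this
      linarith
    · intro u hu
      have hsub := sub_play (G := G) (S := S) y
      rcases SC (hP.mono hsub) u hu with h | ⟨z, hz, -, h⟩ | ⟨z, hz, -, -, -, h⟩
      · omega
      · omega
      · have := wn_anti (G := G) hsub z
        have := h0 z (fun h => hz (hsub h))
        omega
  · push Not at hy
    have hsub := sub_play (G := G) (S := S) v
    refine good_of v (legal (Or.inl rfl) hv) 27 (by norm_num) ?_ ?_
    · exact leaf_gain hP hT hN h0 (fun y h => by have := hy y h; omega) v (legal (Or.inl rfl) hv)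
    · intro u hu
      have := leaf_gain (hP.mono hsub) hT hN (fun x hx => by
        have := wn_anti (G := G) hsub x
        have := h0 x (fun h => hx (hsub h))
        omega) (fun y h => by
        have := wn_anti (G := G) hsub y
        by_cases hyS : y ∈ S
        · have := hy y hyS; omega
        · have := h0 y hyS; omega) u hu
      omega

lemma good1 (hP : PC G S) (hT : ∀ u v, G.Adj u v → ∃ w, G.Adj u w ∧ G.Adj v w)
    (hN : ∀ v, ∃ u, G.Adj v u) {v : V} (hv : v ∉ S) : Good G S := by
  by_cases hA : ∃ v, v ∉ S ∧ wn G S v = 3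
  · obtain ⟨v, hv, h⟩ := hA; exact caseA hP hT hv h
  push Not at hA
  have h2 : ∀ v, v ∉ S → wn G S v ≤ 2 := by
    intro v hv; have := hA v hv; have := hP.1 v hv; omega
  by_cases htri : ∃ a b c, a ∉ S ∧ b ∉ S ∧ c ∉ S ∧ G.Adj a b ∧ G.Adj a c ∧ G.Adj b c
  · obtain ⟨a, b, c, ha, hb, hc, hab, hac, hbc⟩ := htri
    have hsub := sub_play (G := G) (S := S) a
    have haZ := mem_play (G := G) (Or.inl (rfl : a = a)) ha
    have hbZ := mem_play (G := G) (Or.inr hab) hb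
    have hcZ := mem_play (G := G) (Or.inr hac) hc
    refine good_of a (legal (Or.inl rfl) ha) 45 (by norm_num) ?_ ?_
    · have := gain3 hP hsub haZ hbZ hcZ hab.ne hac.ne hbc.ne
      have := gg_zero (G := G) (S := S) a (wn_play (S := S) a)
      have := wn_dec2 hsub haZ hab.symm hcZ hbc hac.ne
      have := wn_dec2 hsub haZ hac.symm hbZ hbc.symm hab.ne
      have := h2 b hb
      have := h2 c hc
      have := gg_zero (G := G) (S := S) (T := S ∪ cN G a) b (by omega)
      have := gg_zero (G := G) (S := S) (T := S ∪ cN G a) c (by omega)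
      omega
    · intro u hu
      have := S13 (hP.mono hsub) u hu
      omega
  push Not at htri
  have hap : ∀ a b, a ∉ S → b ∉ S → G.Adj a b → ∃ r, r ∈ S ∧ G.Adj a r ∧ G.Adj b r := by
    intro a b ha hb hab
    obtain ⟨r, h1, h2⟩ := hT _ _ hab
    refine ⟨r, ?_, h1, h2⟩
    by_contra hr
    exact htri a b r ha hb hr hab h1 h2
  by_cases hB : ∃ v, v ∉ S ∧ wn G S v = 2
  · obtain ⟨v, hv, h⟩ := hB; exact caseB hP hT hN h2 hap htri hv h
  push Not at hB
  have h1 : ∀ v, v ∉ S → wn G S v ≤ 1 := by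
    intro v hv; have := hB v hv; have := h2 v hv; omega
  by_cases hC : ∃ v, v ∉ S ∧ wn G S v ≠ 0
  · obtain ⟨v, hv, h⟩ := hC
    obtain ⟨u, hu⟩ := card_ne_zero.mp h
    rw [mem_wN] at hu
    exact caseC hP hT hN h1 hap hv hu.1 hu.2
  push Not at hC
  exact caseD hP hT hN hC hv

/-! phase 0 -/

lemma phi0_gain (h : S ⊆ T) (X : Finset V) (f : V → ℤ)
    (hf : ∀ v ∈ X, (if v ∈ T then (if wn G T v = 0 then 0 else 9) else 15) + f v ≤
      (if v ∈ S then (if wn G S v = 0 then 0 else 9) else (15 : ℤ))) :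
    Phi0 G T + ∑ v ∈ X, f v ≤ Phi0 G S := by
  unfold Phi0
  have : ∑ v ∈ X, f v = ∑ v, if v ∈ X then f v else 0 := by simp
  rw [this, ← sum_add_distrib]
  apply sum_le_sum
  intro v _
  by_cases hv : v ∈ X
  · rw [if_pos hv]; exact hf v hv
  · rw [if_neg hv, add_zero]
    have := @h v
    have := wn_anti (G := G) h v
    split_ifs <;> first | omega | (exfalso; tauto)

lemma phi_le_phi0 (hP : PC G S) : Phi G S ≤ Phi0 G S := by
  unfold Phi Phi0
  apply sum_le_sum
  intro v _
  by_cases hv : v ∈ S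
  · have := hP.2 v hv
    simp only [hv, if_true, bw]
    split_ifs <;> omega
  · simp [hv]

/-- white vertex played -/
lemma gain0_white {v : V} (hv : v ∉ S) :
    Phi0 G (S ∪ cN G v) + 15 + 6 * wn G S v ≤ Phi0 G S := by
  have h0 := wn_play (G := G) (S := S) v
  have hnot : v ∉ wN G S v := by simp [mem_wN]
  have := phi0_gain (G := G) (sub_play (G := G) (S := S) v) (insert v (wN G S v))
    (fun x => if x = v then 15 else 6) (by
      intro x hx
      rw [mem_insert] at hx
      rcases hx with rfl | hx
      · simp [hv, h0, mem_cN]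
      · rw [mem_wN] at hx
        have : x ≠ v := hx.2.ne'
        simp only [mem_union, mem_cN, hx.1, hx.2, this]
        simp
        split_ifs <;> norm_num)
  rw [sum_insert hnot, sum_congr rfl (g := fun _ => (6:ℤ))] at this
  · simp at this
    unfold wn; linarith
  · intro x hx
    rw [mem_wN] at hx
    simp [hx.2.ne']

lemma gain0_blue {v : V} (hv : v ∈ S) (hw : wn G S v ≠ 0) :
    Phi0 G (S ∪ cN G v) + 9 + 6 * wn G S v ≤ Phi0 G S := by
  have h0 := wn_play (G := G) (S := S) v
  have hnot : v ∉ wN G S v := by simp [mem_wN]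
  have := phi0_gain (G := G) (sub_play (G := G) (S := S) v) (insert v (wN G S v))
    (fun x => if x = v then 9 else 6) (by
      intro x hx
      rw [mem_insert] at hx
      rcases hx with rfl | hx
      · simp [hv, h0, hw]
      · rw [mem_wN] at hx
        have : x ≠ v := hx.2.ne'
        simp only [mem_union, mem_cN, hx.1, hx.2, this]
        simp
        split_ifs <;> norm_num)
  rw [sum_insert hnot, sum_congr rfl (g := fun _ => (6:ℤ))] at this
  · simp at this
    unfold wn; linarith
  · intro x hx
    rw [mem_wN] at hx
    simp [hx.2.ne']

lemma gain0_any (v : V) (hv : ¬ cN G v ⊆ S) : Phi0 G (S ∪ cN G v) + 15 ≤ Phi0 G S := by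
  by_cases h : v ∈ S
  · obtain ⟨z, hz, hzS⟩ := not_subset.mp hv
    rw [mem_cN] at hz
    rcases hz with rfl | hz
    · exact absurd h hzS
    · have := wn_pos hz hzS
      have := gain0_blue (G := G) h (by omega)
      omega
  · have := gain0_white (G := G) h
    omega

lemma good0 (hP : ¬ PC G S) : ∃ v, ¬ cN G v ⊆ S ∧ Phi0 G (S ∪ cN G v) + 39 ≤ Phi0 G S := by
  unfold PC at hP
  rw [not_and_or] at hP
  push Not at hP
  rcases hP with ⟨v, hv, h⟩ | ⟨v, hv, h⟩
  · refine ⟨v, legal (Or.inl rfl) hv, ?_⟩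
    have := gain0_white (G := G) hv
    omega
  · refine ⟨v, legal_blue (by omega), ?_⟩
    have := gain0_blue (G := G) hv (by omega)
    omega

/-! the game -/

lemma val_S (H : Finset (Finset V)) (S : Finset V) (B : ℤ) (h1 : 0 ≤ B)
    (h2 : ∀ u, ¬ closedNbhd H u ⊆ S →
      27 * (domGameVal H true (S ∪ closedNbhd H u) : ℤ) + 27 ≤ B) :
    27 * (domGameVal H false S : ℤ) ≤ B := by
  rw [domGameVal]
  split_ifs with h
  · simp at *
  · obtain ⟨b, hb, he⟩ := exists_mem_eq_sup' (attach_nonempty_iff.mpr h)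
      (fun v : {x // x ∈ (Finset.univ.filter fun v => ¬ closedNbhd H v ⊆ S)} =>
        domGameVal H true (S ∪ closedNbhd H v.1))
    rw [he]
    have := h2 b.1 (mem_filter.mp b.2).2
    push_cast
    linarith
  · simpa using h1

lemma val_D (H : Finset (Finset V)) (S : Finset V) (v : V) (hv : ¬ closedNbhd H v ⊆ S) (B : ℤ)
    (h1 : 27 * (domGameVal H false (S ∪ closedNbhd H v) : ℤ) + 27 ≤ B) :
    27 * (domGameVal H true S : ℤ) ≤ B := by
  have hm : v ∈ (Finset.univ.filter fun v => ¬ closedNbhd H v ⊆ S) := by simp [hv]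
  rw [domGameVal]
  split_ifs with h
  · have := inf'_le (s := (Finset.univ.filter fun v => ¬ closedNbhd H v ⊆ S).attach)
      (fun v : {x // x ∈ (Finset.univ.filter fun v => ¬ closedNbhd H v ⊆ S)} =>
        domGameVal H false (S ∪ closedNbhd H v.1)) (mem_attach _ ⟨v, hm⟩)
    simp only at this
    have h4 := (Nat.cast_le (α := ℤ)).mpr (Nat.add_le_add_left this 1)
    refine le_trans (mul_le_mul_of_nonneg_left h4 (by norm_num)) ?_
    push_cast
    linarith
  · simp at *
  · exact absurd ⟨v, hm⟩ h

lemma val_univ (H : Finset (Finset V)) (b : Bool) : domGameVal H b univ = 0 := by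
  rw [domGameVal]; simp

lemma phi_nonneg (S : Finset V) : 0 ≤ Phi G S := by
  unfold Phi bw
  apply sum_nonneg; intro v _; split_ifs <;> omega
lemma phi0_nonneg (S : Finset V) : 0 ≤ Phi0 G S := by
  unfold Phi0
  apply sum_nonneg; intro v _; split_ifs <;> omega

lemma val1 (H : Finset (Finset V)) (hc : ∀ v, closedNbhd H v = cN G v)
    (hT : ∀ u v, G.Adj u v → ∃ w, G.Adj u w ∧ G.Adj v w) (hN : ∀ v, ∃ u, G.Adj v u) :
    ∀ (n : ℕ) (S : Finset V), (univ \ S).card ≤ n → PC G S →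
      27 * (domGameVal H true S : ℤ) ≤ Phi G S := by
  intro n
  induction n with
  | zero =>
    intro S hS _
    have : S = univ := by
      rw [Nat.le_zero, card_eq_zero, sdiff_eq_empty_iff_subset] at hS
      exact subset_antisymm (subset_univ _) hS
    subst this
    rw [val_univ]; simpa using phi_nonneg _
  | succ n ih =>
    intro S hS hP
    by_cases hex : ∃ v, v ∉ S
    · obtain ⟨v, hv⟩ := hex
      obtain ⟨v, hv, h1, h2⟩ := good1 hP hT hN hv
      apply val_D H S v (by rwa [hc])
      have := val_S H (S ∪ closedNbhd H v) (Phi G S - 27) (by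
        have := phi_nonneg (G := G) (S ∪ cN G v); linarith) (by
        intro u hu
        rw [hc, hc] at hu
        have hlt := card_sdiff_union_lt hv
        have hlt' := card_sdiff_union_lt hu
        have := ih (S ∪ cN G v ∪ cN G u) (by omega)
          (hP.mono (subset_union_left.trans subset_union_left))
        have := h2 u hu
        rw [hc, hc]
        linarith)
      linarith
    · push Not at hex
      have : S = univ := eq_univ_iff_forall.mpr hex
      subst this
      rw [val_univ]; simpa using phi_nonneg _

lemma val0 (H : Finset (Finset V)) (hc : ∀ v, closedNbhd H v = cN G v)
    (hT : ∀ u v, G.Adj u v → ∃ w, G.Adj u w ∧ G.Adj v w) (hN : ∀ v, ∃ u, G.Adj v u) :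
    ∀ (n : ℕ) (S : Finset V), (univ \ S).card ≤ n →
      27 * (domGameVal H true S : ℤ) ≤ Phi0 G S := by
  intro n
  induction n with
  | zero =>
    intro S hS
    have : S = univ := by
      rw [Nat.le_zero, card_eq_zero, sdiff_eq_empty_iff_subset] at hS
      exact subset_antisymm (subset_univ _) hS
    subst this
    rw [val_univ]; simpa using phi0_nonneg _
  | succ n ih =>
    intro S hS
    by_cases hP : PC G S
    · exact (val1 H hc hT hN (n + 1) S hS hP).trans (phi_le_phi0 hP)
    · obtain ⟨v, hv, h1⟩ := good0 hP
      apply val_D H S v (by rwa [hc])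
      have := val_S H (S ∪ closedNbhd H v) (Phi0 G S - 27) (by
        have := phi0_nonneg (G := G) (S ∪ cN G v); linarith) (by
        intro u hu
        rw [hc, hc] at hu
        have hlt := card_sdiff_union_lt hv
        have hlt' := card_sdiff_union_lt hu
        have := ih (S ∪ cN G v ∪ cN G u) (by omega)
        have := gain0_any u hu
        rw [hc, hc]
        linarith)
      linarith

lemma main (H : Finset (Finset V)) (hc : ∀ v, closedNbhd H v = cN G v)
    (hT : ∀ u v, G.Adj u v → ∃ w, G.Adj u w ∧ G.Adj v w) (hN : ∀ v, ∃ u, G.Adj v u) :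
    27 * (gammaGame' H : ℤ) ≤ 15 * Fintype.card V := by
  have e : Phi0 G ∅ = 15 * (Fintype.card V : ℤ) := by simp [Phi0, mul_comm]
  unfold gammaGame'
  apply val_S H ∅ _ (by positivity)
  intro u _
  have h1 := val0 H hc hT hN _ (∅ ∪ closedNbhd H u) le_rfl
  have h2 := gain0_white (G := G) (S := ∅) (v := u) (by simp)
  have h3 := deg2 hT hN ∅ u
  have h4 : bn G ∅ u = 0 := by simp [bn, bN]
  rw [hc] at *
  omega

end DG

/-- if `H` is a 3-uniform hypergraph on `n` vertices with no isolated
vertices, then the Staller-start game domination number satisfies `γ_g'(H) ≤ (5/9) n`. -/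
theorem stmt_13 (V : Type) [Fintype V] (H : Finset (Finset V))
    (huniform : ∀ e ∈ H, e.card = 3)
    (hisol : ∀ v : V, ∃ u : V, u ≠ v ∧ ∃ e ∈ H, u ∈ e ∧ v ∈ e) :
    (gammaGame' H : ℝ) ≤ 5 / 9 * Fintype.card V := by
  let G : SimpleGraph V :=
    { Adj := fun u v => u ≠ v ∧ ∃ e ∈ H, u ∈ e ∧ v ∈ e
      symm := ⟨fun u v h => ⟨h.1.symm, by obtain ⟨e, he, h1, h2⟩ := h.2; exact ⟨e, he, h2, h1⟩⟩⟩
      loopless := ⟨fun u h => h.1 rfl⟩ }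
  have hadj : ∀ u v, G.Adj u v ↔ (u ≠ v ∧ ∃ e ∈ H, u ∈ e ∧ v ∈ e) := fun _ _ => Iff.rfl
  have hc : ∀ v, closedNbhd H v = DG.cN G v := by
    intro v
    ext u
    rw [DG.mem_cN, hadj]
    simp only [closedNbhd, Finset.mem_filter, Finset.mem_univ, true_and]
    constructor
    · rintro (h | ⟨e, he, h1, h2⟩)
      · exact Or.inl h
      · by_cases h : u = v
        · exact Or.inl h
        · exact Or.inr ⟨fun h' => h h'.symm, e, he, h2, h1⟩
    · rintro (h | ⟨-, e, he, h1, h2⟩)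
      · exact Or.inl h
      · exact Or.inr ⟨e, he, h2, h1⟩
  have hT : ∀ u v, G.Adj u v → ∃ w, G.Adj u w ∧ G.Adj v w := by
    rintro u v ⟨hne, e, he, hu, hv⟩
    have h3 := huniform e he
    have : ((e.erase u).erase v).Nonempty := by
      apply Finset.card_pos.mp
      have e1 := Finset.pred_card_le_card_erase (s := e) (a := u)
      have e2 := Finset.pred_card_le_card_erase (s := e.erase u) (a := v)
      omega
    obtain ⟨w, hw⟩ := this
    simp only [Finset.mem_erase] at hw
    exact ⟨w, ⟨fun h => hw.2.1 h.symm, e, he, hu, hw.2.2⟩,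
      ⟨fun h => hw.1 h.symm, e, he, hv, hw.2.2⟩⟩
  have hN : ∀ v, ∃ u, G.Adj v u := by
    intro v
    obtain ⟨u, hne, e, he, h1, h2⟩ := hisol v
    exact ⟨u, fun h => hne h.symm, e, he, h2, h1⟩
  have := DG.main H hc hT hN
  have : (27 * (gammaGame' H : ℝ)) ≤ 15 * Fintype.card V := by exact_mod_cast this
  linarith
end

section
/- If G is a graph on n vertices with no isolated vertices in which every edge belongs to a triangle, then the Staller-start game domination number satisfies γ_g'(G) ≤ (5/9)·n. -/
attribute [local instance 10] Classical.propDecidable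

variable {V : Type}

/-- The closed neighborhood of a vertex in a simple graph, as a finset. -/
noncomputable def gClosedNbhd [Fintype V] (G : SimpleGraph V) (v : V) : Finset V :=
  Finset.univ.filter (fun u => u = v ∨ G.Adj u v)

/-- Value of the domination game on a simple graph: `S` is the set of vertices already
dominated, `dom = true` iff Dominator is the next player to move.  A legal move is a vertex
dominating at least one new vertex; Dominator minimizes, Staller maximizes the total
number of moves, and both play optimally. -/
noncomputable def gDomGameVal [Fintype V] (G : SimpleGraph V) (dom : Bool) (S : Finset V) :
    ℕ :=
  if h : (Finset.univ.filter fun v => ¬ gClosedNbhd G v ⊆ S).Nonempty then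
    1 + (if dom then
        (Finset.univ.filter fun v => ¬ gClosedNbhd G v ⊆ S).attach.inf'
          (Finset.attach_nonempty_iff.mpr h)
          (fun v => gDomGameVal G false (S ∪ gClosedNbhd G v.1))
      else
        (Finset.univ.filter fun v => ¬ gClosedNbhd G v ⊆ S).attach.sup'
          (Finset.attach_nonempty_iff.mpr h)
          (fun v => gDomGameVal G true (S ∪ gClosedNbhd G v.1)))
  else 0
termination_by (Finset.univ \ S).card
decreasing_by
  · exact card_sdiff_union_lt (Finset.mem_filter.mp v.2).2
  · exact card_sdiff_union_lt (Finset.mem_filter.mp v.2).2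

/-- The game domination number of a simple graph (Dominator starts). -/
noncomputable def gGammaGame [Fintype V] (G : SimpleGraph V) : ℕ :=
  gDomGameVal G true ∅

/-- The Staller-start game domination number of a simple graph. -/
noncomputable def gGammaGame' [Fintype V] (G : SimpleGraph V) : ℕ :=
  gDomGameVal G false ∅

/-- weight of a dominated vertex with `k` undominated neighbours -/
def bw : ℕ → ℤ
  | 0 => 0
  | 1 => 16
  | 2 => 20
  | 3 => 24
  | 4 => 25
  | 5 => 26
  | _ + 6 => 27

lemma bw_mono : Monotone bw := by
  apply monotone_nat_of_le_succ
  intro n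
  rcases n with _ | _ | _ | _ | _ | _ | n <;> simp [bw]

lemma bw_le (n : ℕ) : bw n ≤ 27 := by
  rcases n with _ | _ | _ | _ | _ | _ | n <;> simp [bw]

lemma bw_nonneg (n : ℕ) : 0 ≤ bw n := by
  rcases n with _ | _ | _ | _ | _ | _ | n <;> simp [bw]

lemma bw_ge (n : ℕ) (h : 1 ≤ n) : 16 ≤ bw n := bw_mono h

/-- number of neighbours in `U` -/
noncomputable def dg (G : SimpleGraph V) (U : Finset V) (x : V) : ℕ :=
  (U.filter (fun u => G.Adj u x)).card

/-- weight of a vertex -/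
noncomputable def wt (G : SimpleGraph V) (U : Finset V) (x : V) : ℤ :=
  if x ∈ U then 40 else bw (dg G U x)

/-- total weight -/
noncomputable def Pot [Fintype V] (G : SimpleGraph V) (U : Finset V) : ℤ :=
  ∑ x, wt G U x

lemma mem_cn [Fintype V] (G : SimpleGraph V) (u v : V) :
    u ∈ gClosedNbhd G v ↔ u = v ∨ G.Adj u v := by
  simp [gClosedNbhd]

lemma dg_mono (G : SimpleGraph V) {U U' : Finset V} (h : U' ⊆ U) (x : V) :
    dg G U' x ≤ dg G U x :=
  Finset.card_le_card (Finset.filter_subset_filter _ h)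

lemma wt_mono (G : SimpleGraph V) {U U' : Finset V} (h : U' ⊆ U) (x : V) :
    wt G U' x ≤ wt G U x := by
  unfold wt
  by_cases h1 : x ∈ U'
  · simp [h1, h h1]
  · by_cases h2 : x ∈ U
    · simp only [h1, h2, if_true, if_false]
      linarith [bw_le (dg G U' x)]
    · simp only [h1, h2, if_false]
      exact bw_mono (dg_mono G h x)

/-- dropping a set of neighbours from `U` lowers the degree -/
lemma dg_drop (G : SimpleGraph V) {U U' A : Finset V} (h : U' ⊆ U) (x : V)
    (hA : ∀ a ∈ A, a ∈ U ∧ a ∉ U' ∧ G.Adj a x) : dg G U' x + A.card ≤ dg G U x := by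
  unfold dg
  rw [← Finset.card_union_of_disjoint]
  · apply Finset.card_le_card
    intro a ha
    rw [Finset.mem_union] at ha
    rcases ha with ha | ha
    · rw [Finset.mem_filter] at ha ⊢
      exact ⟨h ha.1, ha.2⟩
    · rw [Finset.mem_filter]
      exact ⟨(hA a ha).1, (hA a ha).2.2⟩
  · rw [Finset.disjoint_left]
    intro a ha hb
    exact (hA a hb).2.1 (Finset.mem_filter.mp ha).1

lemma gain [Fintype V] (G : SimpleGraph V)
    (htri : ∀ u v : V, G.Adj u v → ∃ w : V, G.Adj u w ∧ G.Adj v w)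
    (U : Finset V) (v : V) (d e c : ℕ) (ρ : ℤ)
    (hd : ∀ u ∈ U, dg G U u ≤ d) (he : ∀ u, u ∉ U → dg G U u ≤ e)
    (hc : c = if v ∈ U then 1 else 0)
    (H1 : ∀ j, j + 1 + c ≤ d → bw j + ρ ≤ bw (d - c))
    (H2 : ∀ j i k : ℕ, i + k + c ≤ j → 1 ≤ k → j ≤ e → bw i + k * ρ ≤ bw j) :
    Pot G (U \ gClosedNbhd G v) + ((if v ∈ U then 40 else bw (dg G U v))
      + dg G U v * (40 - bw (d - c) + ρ)) ≤ Pot G U := by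
  set U' := U \ gClosedNbhd G v with hU'
  have hsub : U' ⊆ U := Finset.sdiff_subset
  have hU'mem : ∀ x, x ∈ U' ↔ x ∈ U ∧ ¬ (x = v ∨ G.Adj x v) := by
    intro x; rw [hU', Finset.mem_sdiff, mem_cn]
  set X := U.filter (fun u => G.Adj u v) with hX
  have hXmem : ∀ x, x ∈ X ↔ x ∈ U ∧ G.Adj x v := by
    intro x; rw [hX, Finset.mem_filter]
  have hXc : dg G U v = X.card := rfl
  have hw : ∀ x, ∃ w, G.Adj x v → G.Adj x w ∧ G.Adj v w := by
    intro x
    by_cases h : G.Adj x v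
    · obtain ⟨w, hw⟩ := htri x v h
      exact ⟨w, fun _ => hw⟩
    · exact ⟨v, fun h' => absurd h' h⟩
  choose f hf using hw
  set g : V → ℤ := fun x => wt G U x - wt G U' x with hg
  have hgnn : ∀ x, 0 ≤ g x := fun x => sub_nonneg.mpr (wt_mono G hsub x)
  have hsum : Pot G U - Pot G U' = ∑ x, g x := by
    simp only [Pot, hg, Finset.sum_sub_distrib]
  have hvU' : v ∉ U' := by rw [hU'mem]; simp
  have hdv : dg G U' v = 0 := by
    unfold dg
    rw [Finset.card_eq_zero, Finset.filter_eq_empty_iff]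
    intro a ha hav
    exact ((hU'mem a).mp ha).2 (Or.inr hav)
  have hgv : g v = if v ∈ U then 40 else bw (dg G U v) := by
    simp only [hg, wt, hvU', if_false, hdv, bw]
    ring
  -- blue group
  set Y := Finset.univ.filter (fun y => y ∉ U ∧ y ≠ v) with hY
  set XI := X.filter (fun x => f x ∈ U) with hXI
  set XO := X.filter (fun x => ¬ f x ∈ U) with hXO
  have hcardX : XI.card + XO.card = X.card := Finset.card_filter_add_card_filter_not _
  have hvX : v ∉ X := by rw [hXmem]; simp
  have hdisj1 : Disjoint X Y := by
    rw [Finset.disjoint_left]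
    intro a ha hb
    exact (Finset.mem_filter.mp hb).2.1 ((hXmem a).mp ha).1
  have hvXY : v ∉ X ∪ Y := by
    rw [Finset.mem_union]
    rintro (h | h)
    · exact hvX h
    · exact (Finset.mem_filter.mp h).2.2 rfl
  have hge : g v + (∑ x ∈ X, g x + ∑ y ∈ Y, g y) ≤ ∑ x, g x := by
    rw [← Finset.sum_union hdisj1, ← Finset.sum_insert hvXY]
    exact Finset.sum_le_sum_of_subset_of_nonneg (Finset.subset_univ _) (fun i _ _ => hgnn i)
  -- X part
  have hvA : ∀ x, G.Adj x v → ∀ B : Finset V, (∀ b ∈ B, b ∈ X ∧ G.Adj b x) →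
      dg G U' x + B.card + c ≤ dg G U x := by
    intro x hxv B hB
    by_cases hvU : v ∈ U
    · have hvB : v ∉ B := fun h => hvX (hB v h).1
      have := dg_drop G (A := insert v B) hsub x (by
        intro a ha
        rw [Finset.mem_insert] at ha
        rcases ha with rfl | ha
        · exact ⟨hvU, hvU', hxv.symm⟩
        · have h1 := (hXmem a).mp (hB a ha).1
          exact ⟨h1.1, fun h => ((hU'mem a).mp h).2 (Or.inr h1.2), (hB a ha).2⟩)
      rw [Finset.card_insert_of_notMem hvB] at this
      simp only [hvU, if_true] at hc
      omega
    · have := dg_drop G (A := B) hsub x (by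
        intro a ha
        have h1 := (hXmem a).mp (hB a ha).1
        exact ⟨h1.1, fun h => ((hU'mem a).mp h).2 (Or.inr h1.2), (hB a ha).2⟩)
      simp only [hvU, if_false] at hc
      omega
  have hXg : ∀ x ∈ X, 40 - bw (d - c) + (if f x ∈ U then ρ else 0) ≤ g x := by
    intro x hx
    have hx' := (hXmem x).mp hx
    have hxU' : x ∉ U' := fun h => ((hU'mem x).mp h).2 (Or.inr hx'.2)
    have hgx : g x = 40 - bw (dg G U' x) := by
      simp only [hg, wt, hx'.1, hxU', if_true, if_false]
    have hdx := hd x hx'.1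
    rw [hgx]
    by_cases hfx : f x ∈ U
    · have h2 := hvA x hx'.2 {f x} (by
        intro b hb
        rw [Finset.mem_singleton] at hb
        subst hb
        exact ⟨(hXmem _).mpr ⟨hfx, (hf x hx'.2).2.symm⟩, (hf x hx'.2).1.symm⟩)
      rw [Finset.card_singleton] at h2
      have := H1 (dg G U' x) (by omega)
      simp only [hfx, if_true]
      linarith
    · have h2 := hvA x hx'.2 ∅ (by simp)
      rw [Finset.card_empty] at h2
      have : bw (dg G U' x) ≤ bw (d - c) := bw_mono (by omega)
      simp only [hfx, if_false]
      linarith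
  have hXsum : X.card * (40 - bw (d - c)) + XI.card * ρ ≤ ∑ x ∈ X, g x := by
    refine le_trans (le_of_eq ?_) (Finset.sum_le_sum hXg)
    rw [Finset.sum_add_distrib, Finset.sum_const, ← Finset.sum_filter, Finset.sum_const]
    simp [hXI]
  have hYg : ∀ y ∈ Y, ((XO.filter (fun x => f x = y)).card : ℤ) * ρ ≤ g y := by
    intro y hy
    have hy' := (Finset.mem_filter.mp hy).2
    by_cases hk : XO.filter (fun x => f x = y) = ∅
    · rw [hk]; simpa using hgnn y
    · obtain ⟨x0, hx0⟩ := Finset.nonempty_iff_ne_empty.mpr hk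
      have key : ∀ x ∈ XO.filter (fun x => f x = y), x ∈ X ∧ G.Adj x y ∧ G.Adj y v := by
        intro x hx
        have h1 := Finset.mem_filter.mp hx
        have h2 := (Finset.mem_filter.mp h1.1).1
        have h3 := hf x ((hXmem x).mp h2).2
        rw [h1.2] at h3
        exact ⟨h2, h3.1, h3.2.symm⟩
      have h2 := hvA y (key x0 hx0).2.2 (XO.filter (fun x => f x = y))
        (fun b hb => ⟨(key b hb).1, (key b hb).2.1⟩)
      have hyU' : y ∉ U' := fun h => hy'.1 (hsub h)
      have hgy : g y = bw (dg G U y) - bw (dg G U' y) := by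
        simp only [hg, wt, hy'.1, hyU', if_false]
      have := H2 (dg G U y) (dg G U' y) _ h2 (Finset.card_pos.mpr ⟨x0, hx0⟩) (he y hy'.1)
      rw [hgy]
      linarith
  have hYsum : XO.card * ρ ≤ ∑ y ∈ Y, g y := by
    have h1 : XO.card = ∑ y ∈ Y, (XO.filter (fun x => f x = y)).card := by
      apply Finset.card_eq_sum_card_fiberwise
      intro x hx
      have h1 := Finset.mem_filter.mp hx
      have h3 := hf x ((hXmem x).mp h1.1).2
      have : f x ∉ U ∧ f x ≠ v := ⟨h1.2, h3.2.ne'⟩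
      simp [hY, this]
    refine le_trans (le_of_eq ?_) (Finset.sum_le_sum hYg)
    rw [← Finset.sum_mul, h1]
    push_cast
    rfl
  rw [← hgv, hXc]
  have h5 : ((XI.card : ℤ) + XO.card) = X.card := by exact_mod_cast hcardX
  have h6 : (X.card : ℤ) * ρ = XI.card * ρ + XO.card * ρ := by rw [← h5]; ring
  have h7 : (X.card : ℤ) * (40 - bw (d - c) + ρ) = X.card * (40 - bw (d - c)) + X.card * ρ := by
    ring
  rw [h7, h6]
  linarith

/-- an isolated undominated vertex gets dominated -/
lemma gain_iso [Fintype V] (G : SimpleGraph V) (U : Finset V) (u v p q : V)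
    (hu : u ∈ U) (huv : u = v ∨ G.Adj u v) (h0 : dg G U u = 0)
    (hp : G.Adj u p) (hq : G.Adj u q) (hpq : p ≠ q) (σ : ℤ)
    (H : ∀ y, y ∉ U → ∀ i, i + 1 ≤ dg G U y → bw i + σ ≤ bw (dg G U y)) :
    Pot G (U \ gClosedNbhd G v) + (40 + 2 * σ) ≤ Pot G U := by
  set U' := U \ gClosedNbhd G v with hU'
  have hsub : U' ⊆ U := Finset.sdiff_subset
  have hU'mem : ∀ x, x ∈ U' ↔ x ∈ U ∧ ¬ (x = v ∨ G.Adj x v) := by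
    intro x; rw [hU', Finset.mem_sdiff, mem_cn]
  have huU' : u ∉ U' := fun h => ((hU'mem u).mp h).2 huv
  have hnb : ∀ p, G.Adj u p → wt G U' p + σ ≤ wt G U p := by
    intro p hp
    have hpU : p ∉ U := by
      intro h
      unfold dg at h0
      rw [Finset.card_eq_zero, Finset.filter_eq_empty_iff] at h0
      exact h0 h hp.symm
    have hpU' : p ∉ U' := fun h => hpU (hsub h)
    have h1 := dg_drop G (A := {u}) hsub p (by
      intro a ha
      rw [Finset.mem_singleton] at ha
      subst ha
      exact ⟨hu, huU', hp⟩)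
    rw [Finset.card_singleton] at h1
    have := H p hpU _ h1
    simpa only [wt, hpU, hpU', if_false] using this
  have hsum : Pot G U - Pot G U' = ∑ x, (wt G U x - wt G U' x) := by
    simp only [Pot, Finset.sum_sub_distrib]
  have hge : ∑ x ∈ ({u, p, q} : Finset V), (wt G U x - wt G U' x)
      ≤ ∑ x, (wt G U x - wt G U' x) :=
    Finset.sum_le_sum_of_subset_of_nonneg (Finset.subset_univ _)
      (fun i _ _ => sub_nonneg.mpr (wt_mono G hsub i))
  rw [Finset.sum_insert (by simp [hp.ne, hq.ne]), Finset.sum_pair hpq] at hge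
  have h2 : wt G U u - wt G U' u = 40 := by
    have h3 : dg G U' u = 0 := by
      have := dg_mono G hsub u
      omega
    simp [wt, hu, huU', h3, bw]
  have := hnb p hp
  have := hnb q hq
  linarith

lemma two_nbrs (G : SimpleGraph V) (hisol : ∀ v : V, ∃ u : V, G.Adj u v)
    (htri : ∀ u v : V, G.Adj u v → ∃ w : V, G.Adj u w ∧ G.Adj v w) (u : V) :
    ∃ p q, G.Adj u p ∧ G.Adj u q ∧ p ≠ q := by
  obtain ⟨p, hp⟩ := hisol u
  obtain ⟨w, hw⟩ := htri p u hp
  exact ⟨p, w, hp.symm, hw.2, hw.1.ne⟩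

/-- legal move -/
def Legal [Fintype V] (G : SimpleGraph V) (U : Finset V) (v : V) : Prop :=
  ∃ u ∈ U, u = v ∨ G.Adj u v

lemma staller [Fintype V] (G : SimpleGraph V) (hisol : ∀ v : V, ∃ u : V, G.Adj u v)
    (htri : ∀ u v : V, G.Adj u v → ∃ w : V, G.Adj u w ∧ G.Adj v w)
    (U : Finset V) (v : V) (hv : Legal G U v) (d e : ℕ) (σ : ℤ) (hde : d ≤ e) (hd1 : 1 ≤ d)
    (hσ : 0 ≤ σ) (hσ' : σ ≤ 4)
    (hd : ∀ u ∈ U, dg G U u ≤ d) (he : ∀ u, u ∉ U → dg G U u ≤ e)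
    (H2 : ∀ j i k : ℕ, i + k ≤ j → 1 ≤ k → j ≤ e → bw i + k * σ ≤ bw j) :
    Pot G (U \ gClosedNbhd G v) + (56 - bw d + σ) ≤ Pot G U := by
  have hb := bw_le d
  have hb1 := bw_ge d hd1
  by_cases hvU : v ∈ U
  · rcases Nat.eq_zero_or_pos (dg G U v) with h0 | hpos
    · obtain ⟨p, q, hp, hq, hpq⟩ := two_nbrs G hisol htri v
      have := gain_iso G U v v p q hvU (Or.inl rfl) h0 hp hq hpq σ (by
        intro y hy i hi
        have := H2 (dg G U y) i 1 hi le_rfl (he y hy)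
        simpa using this)
      linarith
    · have := gain G htri U v d e 1 0 hd he (by simp [hvU])
        (by intro j hj; simpa using bw_mono (by omega))
        (by intro j i k h _ _; simpa using bw_mono (by omega))
      simp only [hvU, if_true] at this
      have h2 := bw_le (d - 1)
      have h3 : (1 : ℤ) ≤ dg G U v := by exact_mod_cast hpos
      nlinarith
  · have hpos : 1 ≤ dg G U v := by
      obtain ⟨u, hu, huv⟩ := hv
      rcases huv with rfl | huv
      · exact absurd hu hvU
      · exact Finset.card_pos.mpr ⟨u, Finset.mem_filter.mpr ⟨hu, huv⟩⟩
    have := gain G htri U v d e 0 σ hd he (by simp [hvU])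
      (by intro j hj; simpa using H2 d j 1 (by omega) le_rfl hde)
      (by intro j i k h h1 h2; exact H2 j i k (by omega) h1 h2)
    simp only [hvU, if_false, Nat.sub_zero] at this
    have h2 := bw_ge _ hpos
    have h3 : (1 : ℤ) ≤ dg G U v := by exact_mod_cast hpos
    nlinarith

/-- conclusion of a Dominator step -/
def Good [Fintype V] (G : SimpleGraph V) (U : Finset V) : Prop :=
  ∃ v, Legal G U v ∧ Pot G (U \ gClosedNbhd G v) + 72 ≤ Pot G U ∧
    ∀ w, Legal G (U \ gClosedNbhd G v) w →
      Pot G ((U \ gClosedNbhd G v) \ gClosedNbhd G w) + 144 ≤ Pot G U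

lemma stepW [Fintype V] (G : SimpleGraph V) (hisol : ∀ v : V, ∃ u : V, G.Adj u v)
    (htri : ∀ u v : V, G.Adj u v → ∃ w : V, G.Adj u w ∧ G.Adj v w)
    (U : Finset V) (v : V) (d : ℕ) (ρ σ : ℤ) (hd1 : 1 ≤ d) (hvU : v ∈ U) (hvd : dg G U v = d)
    (hσ : 0 ≤ σ) (hσ' : σ ≤ 4)
    (hd : ∀ u ∈ U, dg G U u ≤ d) (he : ∀ u, u ∉ U → dg G U u ≤ d + 1)
    (H1 : ∀ j, j + 1 + 1 ≤ d → bw j + ρ ≤ bw (d - 1))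
    (H2 : ∀ j i k : ℕ, i + k + 1 ≤ j → 1 ≤ k → j ≤ d + 1 → bw i + k * ρ ≤ bw j)
    (H3 : ∀ j i k : ℕ, i + k ≤ j → 1 ≤ k → j ≤ d + 1 → bw i + k * σ ≤ bw j)
    (hnum1 : 72 ≤ 40 + d * (40 - bw (d - 1) + ρ))
    (hnum : 144 ≤ 40 + d * (40 - bw (d - 1) + ρ) + (56 - bw d + σ)) : Good G U := by
  have h1 := gain G htri U v d (d + 1) 1 ρ hd he (by simp [hvU]) H1 H2
  simp only [hvU, if_true, hvd] at h1
  have hsub : U \ gClosedNbhd G v ⊆ U := Finset.sdiff_subset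
  refine ⟨v, ⟨v, hvU, Or.inl rfl⟩, by linarith, ?_⟩
  intro w hw
  have h2 := staller G hisol htri _ w hw d (d + 1) σ (by omega) hd1 hσ hσ'
    (fun u hu => (dg_mono G hsub u).trans (hd u (hsub hu)))
    (fun u hu => (dg_mono G hsub u).trans (by
      by_cases h : u ∈ U
      · exact (hd u h).trans (by omega)
      · exact he u h)) H3
  linarith

lemma stepB [Fintype V] (G : SimpleGraph V) (hisol : ∀ v : V, ∃ u : V, G.Adj u v)
    (htri : ∀ u v : V, G.Adj u v → ∃ w : V, G.Adj u w ∧ G.Adj v w)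
    (U : Finset V) (v : V) (d e : ℕ) (σ : ℤ) (hd1 : 1 ≤ d) (hde : d < e) (hvU : v ∉ U)
    (hvd : dg G U v = e)
    (hσ : 0 ≤ σ) (hσ' : σ ≤ 4)
    (hd : ∀ u ∈ U, dg G U u ≤ d) (he : ∀ u, u ∉ U → dg G U u ≤ e)
    (H3 : ∀ j i k : ℕ, i + k ≤ j → 1 ≤ k → j ≤ e → bw i + k * σ ≤ bw j)
    (hnum1 : 72 ≤ bw e + e * (40 - bw d + σ))
    (hnum : 144 ≤ bw e + e * (40 - bw d + σ) + (56 - bw d + σ)) : Good G U := by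
  have h1 := gain G htri U v d e 0 σ hd he (by simp [hvU])
      (by intro j hj; simpa using H3 d j 1 (by omega) le_rfl hde.le)
      (by intro j i k h h1 h2; exact H3 j i k (by omega) h1 h2)
  simp only [hvU, if_false, hvd, Nat.sub_zero] at h1
  have hsub : U \ gClosedNbhd G v ⊆ U := Finset.sdiff_subset
  have hleg : Legal G U v := by
    have : 0 < dg G U v := by omega
    obtain ⟨u, hu⟩ := Finset.card_pos.mp this
    rw [Finset.mem_filter] at hu
    exact ⟨u, hu.1, Or.inr hu.2⟩
  refine ⟨v, hleg, by linarith, ?_⟩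
  intro w hw
  have h2 := staller G hisol htri _ w hw d e σ hde.le hd1 hσ hσ'
    (fun u hu => (dg_mono G hsub u).trans (hd u (hsub hu)))
    (fun u hu => (dg_mono G hsub u).trans (by
      by_cases h : u ∈ U
      · exact (hd u h).trans hde.le
      · exact he u h)) H3
  linarith

lemma slope4 (e : ℕ) (he : e ≤ 3) :
    ∀ j i k : ℕ, i + k ≤ j → 1 ≤ k → j ≤ e → bw i + (k : ℤ) * 4 ≤ bw j := by
  intro j i k h1 h2 h3
  have hj : j ≤ 3 := by omega
  have hk : k ≤ 3 := by omega
  have hi : i ≤ 3 := by omega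
  interval_cases j <;> interval_cases k <;> interval_cases i <;> first | omega | simp [bw]

lemma slope1 (e : ℕ) (he : e ≤ 6) :
    ∀ j i k : ℕ, i + k ≤ j → 1 ≤ k → j ≤ e → bw i + (k : ℤ) * 1 ≤ bw j := by
  intro j i k h1 h2 h3
  have hj : j ≤ 6 := by omega
  have hk : k ≤ 6 := by omega
  have hi : i ≤ 6 := by omega
  interval_cases j <;> interval_cases k <;> interval_cases i <;> first | omega | simp [bw]

lemma slope0 (e : ℕ) :
    ∀ j i k : ℕ, i + k ≤ j → 1 ≤ k → j ≤ e → bw i + (k : ℤ) * 0 ≤ bw j := by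
  intro j i k h1 h2 h3
  simpa using bw_mono (by omega)

lemma slopeW (d e : ℕ) (ρ : ℤ) (h : d ≤ 5)
    (hh : (d, ρ) = (1, 20) ∨ (d, ρ) = (2, 8) ∨ (d, ρ) = (3, 4) ∨ (d, ρ) = (4, 2) ∨ (d, ρ) = (5, 1)) :
    ∀ j i k : ℕ, i + k + 1 ≤ j → 1 ≤ k → j ≤ d + 1 → bw i + (k : ℤ) * ρ ≤ bw j := by
  intro j i k h1 h2 h3
  have hj : j ≤ 6 := by omega
  have hk : k ≤ 6 := by omega
  have hi : i ≤ 6 := by omega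
  simp only [Prod.mk.injEq] at hh
  rcases hh with ⟨rfl, rfl⟩ | ⟨rfl, rfl⟩ | ⟨rfl, rfl⟩ | ⟨rfl, rfl⟩ | ⟨rfl, rfl⟩ <;>
  interval_cases j <;> interval_cases k <;> interval_cases i <;> first | omega | simp [bw]

lemma bw_six (n : ℕ) (h : 6 ≤ n) : bw n = 27 := by
  obtain ⟨m, rfl⟩ := Nat.exists_eq_add_of_le' h
  rfl

lemma zero_gain [Fintype V] (G : SimpleGraph V) (hisol : ∀ v : V, ∃ u : V, G.Adj u v)
    (htri : ∀ u v : V, G.Adj u v → ∃ w : V, G.Adj u w ∧ G.Adj v w)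
    (U : Finset V) (hd : ∀ u ∈ U, dg G U u = 0) (w : V) (hw : Legal G U w) :
    Pot G (U \ gClosedNbhd G w) + 40 ≤ Pot G U ∧
    ((∀ y, y ∉ U → dg G U y ≤ 1) → Pot G (U \ gClosedNbhd G w) + 72 ≤ Pot G U) := by
  obtain ⟨u, hu, huw⟩ := hw
  obtain ⟨p, q, hp, hq, hpq⟩ := two_nbrs G hisol htri u
  constructor
  · have := gain_iso G U u w p q hu huw (hd u hu) hp hq hpq 0
      (by intro y _ i hi; simpa using bw_mono (by omega))
    linarith
  · intro he
    have := gain_iso G U u w p q hu huw (hd u hu) hp hq hpq 16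
      (by
        intro y hy i hi
        have h1 := he y hy
        have h2 : dg G U y = 1 := by omega
        have h3 : i = 0 := by omega
        rw [h2, h3]; simp [bw])
    linarith

lemma good [Fintype V] (G : SimpleGraph V) (hisol : ∀ v : V, ∃ u : V, G.Adj u v)
    (htri : ∀ u v : V, G.Adj u v → ∃ w : V, G.Adj u w ∧ G.Adj v w)
    (U : Finset V) (hU : U.Nonempty) : Good G U := by
  obtain ⟨v, hvU, hvmax⟩ := Finset.exists_max_image U (dg G U) hU
  obtain ⟨d, hvd⟩ : ∃ d, dg G U v = d := ⟨_, rfl⟩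
  rw [hvd] at hvmax
  by_cases hall : ∀ y, y ∉ U → dg G U y ≤ d + 1
  · rcases Nat.lt_or_ge d 6 with h6 | h6
    · interval_cases d
      · -- terminal
        have hd0 : ∀ u ∈ U, dg G U u = 0 := fun u hu => Nat.le_zero.mp (hvmax u hu)
        have hleg : Legal G U v := ⟨v, hvU, Or.inl rfl⟩
        have h1 := (zero_gain G hisol htri U hd0 v hleg).2 hall
        have hsub : U \ gClosedNbhd G v ⊆ U := Finset.sdiff_subset
        refine ⟨v, hleg, h1, ?_⟩
        intro w hw
        have h2 := (zero_gain G hisol htri _ (fun u hu =>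
          Nat.le_zero.mp ((dg_mono G hsub u).trans (hd0 u (hsub hu)).le)) w hw).2
          (fun y _ => (dg_mono G hsub y).trans (by
            by_cases h : y ∈ U
            · rw [hd0 y h]; omega
            · exact hall y h))
        linarith
      · exact stepW G hisol htri U v 1 20 4 (by norm_num) hvU hvd (by norm_num) (by norm_num)
          hvmax hall (by intro j hj; omega) (slopeW 1 0 20 (by norm_num) (by simp))
          (slope4 _ (by norm_num)) (by norm_num [bw]) (by norm_num [bw])
      · exact stepW G hisol htri U v 2 8 4 (by norm_num) hvU hvd (by norm_num) (by norm_num)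
          hvmax hall (by intro j hj; have : j = 0 := by omega
                         subst this; simp [bw])
          (slopeW 2 0 8 (by norm_num) (by simp))
          (slope4 _ (by norm_num)) (by norm_num [bw]) (by norm_num [bw])
      · exact stepW G hisol htri U v 3 4 1 (by norm_num) hvU hvd (by norm_num) (by norm_num)
          hvmax hall
          (by intro j hj; have : j ≤ 1 := by omega
              interval_cases j <;> simp [bw])
          (slopeW 3 0 4 (by norm_num) (by simp))
          (slope1 _ (by norm_num)) (by norm_num [bw]) (by norm_num [bw])
      · exact stepW G hisol htri U v 4 2 1 (by norm_num) hvU hvd (by norm_num) (by norm_num)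
          hvmax hall
          (by intro j hj; have : j ≤ 2 := by omega
              interval_cases j <;> simp [bw])
          (slopeW 4 0 2 (by norm_num) (by simp))
          (slope1 _ (by norm_num)) (by norm_num [bw]) (by norm_num [bw])
      · exact stepW G hisol htri U v 5 1 1 (by norm_num) hvU hvd (by norm_num) (by norm_num)
          hvmax hall
          (by intro j hj; have : j ≤ 3 := by omega
              interval_cases j <;> simp [bw])
          (slopeW 5 0 1 (by norm_num) (by simp))
          (slope1 _ (by norm_num)) (by norm_num [bw]) (by norm_num [bw])
    · have hb := bw_le (d - 1)
      have hb' := bw_six d h6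
      have hnum : 115 ≤ 40 + (d : ℤ) * (40 - bw (d - 1) + 0) := by
        rcases Nat.eq_or_lt_of_le h6 with rfl | h7
        · norm_num [bw]
        · have : (7 : ℤ) ≤ d := by exact_mod_cast h7
          nlinarith
      exact stepW G hisol htri U v d 0 0 (by omega) hvU hvd (by norm_num) (by norm_num)
        hvmax hall (by intro j hj; simpa using bw_mono (by omega))
        (by intro j i k h _ _; simpa using bw_mono (by omega))
        (slope0 _) (by linarith) (by linarith)
  · push Not at hall
    obtain ⟨y0, hy0, hy0d⟩ := hall
    obtain ⟨y, hy, hymax⟩ := Finset.exists_max_image (Finset.univ.filter (fun y => y ∉ U))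
      (dg G U) ⟨y0, by simp [hy0]⟩
    have hyU : y ∉ U := (Finset.mem_filter.mp hy).2
    have hymax' : ∀ u, u ∉ U → dg G U u ≤ dg G U y := fun u hu => hymax u (by simp [hu])
    have hyd : d + 1 < dg G U y := lt_of_lt_of_le hy0d (hymax' y0 hy0)
    obtain ⟨e, hye⟩ : ∃ e, dg G U y = e := ⟨_, rfl⟩
    rw [hye] at hymax' hyd
    rcases Nat.eq_zero_or_pos d with rfl | hd1
    · -- d = 0
      have hd0 : ∀ u ∈ U, dg G U u = 0 := fun u hu => Nat.le_zero.mp (hvmax u hu)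
      have hsub : U \ gClosedNbhd G y ⊆ U := Finset.sdiff_subset
      have hleg : Legal G U y := by
        have : 0 < dg G U y := by omega
        obtain ⟨u, hu⟩ := Finset.card_pos.mp this
        rw [Finset.mem_filter] at hu
        exact ⟨u, hu.1, Or.inr hu.2⟩
      have h1 : Pot G (U \ gClosedNbhd G y) + 104 ≤ Pot G U := by
        rcases Nat.eq_or_lt_of_le hyd with h2 | h3
        · have h2' : e = 2 := by omega
          subst h2'
          have := gain G htri U y 0 2 0 4 hvmax hymax' (by simp [hyU])
            (by intro j hj; omega)
            (by intro j i k h h1 h2; exact slope4 2 (by norm_num) j i k (by omega) h1 h2)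
          simp only [hyU, if_false, hye] at this
          norm_num [bw] at this
          linarith
        · have := gain G htri U y 0 e 0 0 hvmax hymax' (by simp [hyU])
            (by intro j hj; omega)
            (by intro j i k h h1 h2; exact slope0 e j i k (by omega) h1 h2)
          simp only [hyU, if_false, hye] at this
          have h4 : (3 : ℤ) ≤ e := by exact_mod_cast h3
          have h5 := bw_nonneg e
          have h6 : bw (0 - 0) = 0 := rfl
          rw [h6] at this
          nlinarith
      refine ⟨y, hleg, by linarith, ?_⟩
      intro w hw
      have h2 := (zero_gain G hisol htri _ (fun u hu =>
          Nat.le_zero.mp ((dg_mono G hsub u).trans (hd0 u (hsub hu)).le)) w hw).1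
      linarith
    · by_cases hs : (d = 1 ∧ e = 3)
      · obtain ⟨rfl, rfl⟩ := hs
        exact stepB G hisol htri U y 1 3 4 le_rfl (by omega) hyU hye (by norm_num) (by norm_num)
          hvmax hymax' (slope4 _ le_rfl) (by norm_num [bw]) (by norm_num [bw])
      · by_cases h6 : e ≤ 6
        · have hd4 : d ≤ 4 := by omega
          refine stepB G hisol htri U y d e 1 hd1 (by omega) hyU hye (by norm_num) (by norm_num)
            hvmax hymax' (slope1 _ h6) ?_ ?_ <;>
          (interval_cases d <;> interval_cases e <;> first | omega | norm_num [bw])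
        · have h7 : (7 : ℤ) ≤ e := by exact_mod_cast (by omega : 7 ≤ e)
          have hb := bw_le d
          have hb' := bw_six e (by omega)
          have hn : 118 ≤ bw e + e * (40 - bw d + 0) := by nlinarith
          exact stepB G hisol htri U y d e 0 hd1 (by omega) hyU hye (by norm_num) (by norm_num)
            hvmax hymax' (slope0 _) (by linarith) (by linarith)

lemma legal_iff [Fintype V] (G : SimpleGraph V) (S : Finset V) (v : V) :
    ¬ gClosedNbhd G v ⊆ S ↔ Legal G (Finset.univ \ S) v := by
  rw [Finset.not_subset]
  constructor
  · rintro ⟨u, hu, huS⟩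
    exact ⟨u, by simp [huS], (mem_cn G u v).mp hu⟩
  · rintro ⟨u, hu, huv⟩
    exact ⟨u, (mem_cn G u v).mpr huv, by simpa using hu⟩

lemma val_true_le [Fintype V] (G : SimpleGraph V) (S : Finset V) (v : V)
    (hv : ¬ gClosedNbhd G v ⊆ S) :
    gDomGameVal G true S ≤ 1 + gDomGameVal G false (S ∪ gClosedNbhd G v) := by
  have hm : v ∈ Finset.univ.filter (fun v => ¬ gClosedNbhd G v ⊆ S) := by simp [hv]
  rw [gDomGameVal, dif_pos ⟨v, hm⟩]
  simp only [if_true]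
  gcongr
  exact Finset.inf'_le (fun v : {x // x ∈ Finset.univ.filter (fun v => ¬ gClosedNbhd G v ⊆ S)} =>
    gDomGameVal G false (S ∪ gClosedNbhd G v.1)) (Finset.mem_attach _ ⟨v, hm⟩)

lemma val_false_le [Fintype V] (G : SimpleGraph V) (S : Finset V) :
    gDomGameVal G false S = 0 ∨ ∃ v, ¬ gClosedNbhd G v ⊆ S ∧
      gDomGameVal G false S = 1 + gDomGameVal G true (S ∪ gClosedNbhd G v) := by
  by_cases h : (Finset.univ.filter fun v => ¬ gClosedNbhd G v ⊆ S).Nonempty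
  · right
    rw [gDomGameVal, dif_pos h]
    obtain ⟨w, _, hw⟩ := Finset.exists_mem_eq_sup' (Finset.attach_nonempty_iff.mpr h)
      (fun v : {x // x ∈ Finset.univ.filter (fun v => ¬ gClosedNbhd G v ⊆ S)} =>
        gDomGameVal G true (S ∪ gClosedNbhd G v.1))
    refine ⟨w.1, (Finset.mem_filter.mp w.2).2, ?_⟩
    simp only [Bool.false_eq_true, if_false]
    rw [hw]
  · left
    rw [gDomGameVal, dif_neg h]

lemma pot_nonneg [Fintype V] (G : SimpleGraph V) (U : Finset V) : 0 ≤ Pot G U := by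
  apply Finset.sum_nonneg
  intro x _
  unfold wt
  split_ifs
  · norm_num
  · exact bw_nonneg _

lemma main_bound [Fintype V] (G : SimpleGraph V) (hisol : ∀ v : V, ∃ u : V, G.Adj u v)
    (htri : ∀ u v : V, G.Adj u v → ∃ w : V, G.Adj u w ∧ G.Adj v w) :
    ∀ n : ℕ, ∀ S : Finset V, (Finset.univ \ S).card ≤ n →
      72 * (gDomGameVal G true S : ℤ) ≤ Pot G (Finset.univ \ S) := by
  intro n
  induction n using Nat.strong_induction_on with
  | _ n ih =>
  intro S hS
  rcases Finset.eq_empty_or_nonempty (Finset.univ \ S) with h0 | hne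
  · have : ¬ (Finset.univ.filter fun v => ¬ gClosedNbhd G v ⊆ S).Nonempty := by
      rintro ⟨v, hv⟩
      obtain ⟨u, hu, _⟩ := (legal_iff G S v).mp (Finset.mem_filter.mp hv).2
      rw [h0] at hu
      simp at hu
    rw [gDomGameVal, dif_neg this]
    simpa using pot_nonneg G _
  · obtain ⟨v, hv, h1, h2⟩ := good G hisol htri _ hne
    have hv' := (legal_iff G S v).mpr hv
    have h3 := val_true_le G S v hv'
    have e1 : (Finset.univ \ S) \ gClosedNbhd G v = Finset.univ \ (S ∪ gClosedNbhd G v) :=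
      sdiff_sdiff_left
    rw [e1] at h1 h2
    have hpn := pot_nonneg G (Finset.univ \ (S ∪ gClosedNbhd G v))
    rcases val_false_le G (S ∪ gClosedNbhd G v) with h4 | ⟨w, hw, h4⟩
    · have : (gDomGameVal G true S : ℤ) ≤ 1 := by exact_mod_cast (by omega)
      linarith
    · have h5 := h2 w ((legal_iff G _ w).mp hw)
      have e2 : (Finset.univ \ (S ∪ gClosedNbhd G v)) \ gClosedNbhd G w
        = Finset.univ \ (S ∪ gClosedNbhd G v ∪ gClosedNbhd G w) := sdiff_sdiff_left
      rw [e2] at h5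
      have c1 := card_sdiff_union_lt hv'
      have c2 := card_sdiff_union_lt hw
      have h6 := ih _ (by omega) (S ∪ gClosedNbhd G v ∪ gClosedNbhd G w) le_rfl
      have h7 : (gDomGameVal G true S : ℤ)
          ≤ 2 + gDomGameVal G true (S ∪ gClosedNbhd G v ∪ gClosedNbhd G w) := by
        exact_mod_cast (by omega)
      linarith

lemma main_int [Fintype V] (G : SimpleGraph V) (hisol : ∀ v : V, ∃ u : V, G.Adj u v)
    (htri : ∀ u v : V, G.Adj u v → ∃ w : V, G.Adj u w ∧ G.Adj v w) :
    9 * gGammaGame' G ≤ 5 * Fintype.card V := by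
  unfold gGammaGame'
  rcases val_false_le G ∅ with h | ⟨v, hv, h⟩
  · rw [h]; omega
  · have h1 := main_bound G hisol htri _ (∅ ∪ gClosedNbhd G v) le_rfl
    obtain ⟨p, q, hp, hq, hpq⟩ := two_nbrs G hisol htri v
    have h2 := gain G htri Finset.univ v (Finset.univ.sup (dg G Finset.univ)) 0 1 0
      (fun u hu => Finset.le_sup hu) (by simp) (by simp)
      (by intro j hj; simpa using bw_mono (by omega))
      (by intro j i k h _ _; simpa using bw_mono (by omega))
    have hb := bw_le (Finset.univ.sup (dg G Finset.univ) - 1)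
    have h3 : 2 ≤ dg G Finset.univ v := by
      rw [← Finset.card_pair hpq]
      apply Finset.card_le_card
      intro a ha
      simp only [Finset.mem_insert, Finset.mem_singleton] at ha
      rcases ha with rfl | rfl
      · simp [hp.symm]
      · simp [hq.symm]
    have h3' : (2 : ℤ) ≤ dg G Finset.univ v := by exact_mod_cast h3
    have h4 : Pot G Finset.univ = 40 * Fintype.card V := by
      simp [Pot, wt, mul_comm]
    have e1 : Finset.univ \ (∅ ∪ gClosedNbhd G v) = Finset.univ \ gClosedNbhd G v := by
      rw [Finset.empty_union]
    rw [e1] at h1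
    simp only [Finset.mem_univ, if_true] at h2
    have h5 : 66 ≤ 40 + (dg G Finset.univ v : ℤ)
        * (40 - bw (Finset.univ.sup (dg G Finset.univ) - 1) + 0) := by nlinarith
    omega

/-- if `G` is a graph on `n` vertices with no isolated vertices in which
every edge belongs to a triangle, then the Staller-start game domination number satisfies
`γ_g'(G) ≤ (5/9) n`. -/
theorem stmt_14 (V : Type) [Fintype V] (G : SimpleGraph V)
    (hisol : ∀ v : V, ∃ u : V, G.Adj u v)
    (htri : ∀ u v : V, G.Adj u v → ∃ w : V, G.Adj u w ∧ G.Adj v w) :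
    (gGammaGame' G : ℝ) ≤ 5 / 9 * Fintype.card V := by
  have h := main_int G hisol htri
  have h' : (9 : ℝ) * gGammaGame' G ≤ 5 * Fintype.card V := by exact_mod_cast h
  linarith
end
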